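/- arXiv:2206.11638 — 3 statements merged into one kernel-verified Lean document; each statement's English description precedes it below -/
import Mathlib

section
/- Fix an integer k ≥ 1. Let a : Fin k → ℂ satisfy Im(a j) ≥ 0 for all j, and assume k·(a j) ∈ ℤ for at least one j. Let x : Fin k → ℝ with x j ≥ 0 for all j. Then there exists F : ℂ → ℂ, analytic on ℂ \ {1}, such that F(s) = ζ_k(a, x, s) = Σ_{n=1}^∞ exp(2πi·n·a_{ι(n)}) · (n + x_{ι(n)})^{−s} for every s with Re s > 1, and (s − 1)·F(s) → (1/k)·Σ_{j ∈ Fin k, k·(a j) ∈ ℤ} exp(2πi·(j+1)·(a j)) as s → 1 along s ≠ 1. In other words, ζ_k(a, x, ·) extends meromorphically to ℂ with at worst a simple pole at s = 1 of residue (1/k)·Σ_{a_j ∈ ℤ[1/k]} e^{2πi j a_j} (with j the 1-based index). -/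
/-!
Splitting the series by the residue `j` of `n` modulo `k` turns it into the finite combination
`∑ j, e ^ (2πi (j + 1) a_j) * k ^ (-s) * Φ(z_j, s, c_j)` of Lerch series
`Φ(z, s, c) = ∑ m, z ^ m * (m + c) ^ (-s)` with `z_j = e ^ (2πi k a_j)` in the closed unit disc and
`c_j = (j + 1 + x_j) / k > 0`.

If `z_j = 1`, that is `k a_j ∈ ℤ`, the Lerch series is a Hurwitz zeta function up to finitely many
terms, with residue `1` at `s = 1`. If `z_j ≠ 1`, it extends to an entire function: summation by
parts gives `(1 - z) ∑ z ^ m f(m + c) = f(c) + z ∑ z ^ m Δf(m + c)`, and each forward difference of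
`f(t) = t ^ (-s)` improves the decay by a factor `1 / t`, so that `N` steps continue the series to
`Re s > 1 - N`.
-/

open Filter Topology fwdDiff

section ForwardDifference

variable {E : Type*} [NormedAddCommGroup E] [NormedSpace ℝ E]

lemma hasDerivAt_fwdDiff_iter {f f' : ℝ → E} {h t : ℝ} (N : ℕ)
    (hf : ∀ i ≤ N, HasDerivAt f (f' (t + i • h)) (t + i • h)) :
    HasDerivAt ((Δ_[h])^[N] f) ((Δ_[h])^[N] f' t) t := by
  rw [funext (fwdDiff_iter_eq_sum_shift h f N), fwdDiff_iter_eq_sum_shift]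
  refine HasDerivAt.fun_sum fun i hi ↦ ?_
  exact ((hf i (Finset.mem_range_succ_iff.mp hi)).comp_add_const t (i • h)).const_smul (R := ℤ) _

lemma norm_fwdDiff_iter_le {f : ℕ → ℝ → E} {h t C : ℝ} (hh : 0 ≤ h) (N : ℕ)
    (hf : ∀ i < N, ∀ u ∈ Set.Icc t (t + N * h), HasDerivAt (f i) (f (i + 1) u) u)
    (hC : ∀ u ∈ Set.Icc t (t + N * h), ‖f N u‖ ≤ C) :
    ‖(Δ_[h])^[N] (f 0) t‖ ≤ C * h ^ N := by
  induction N generalizing f t with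
  | zero => simpa using hC t (by simp)
  | succ N ih =>
    push_cast at hf hC
    have hsub {u v : ℝ} (hu : u ∈ Set.Icc t (t + h)) (hv : v ∈ Set.Icc u (u + N * h)) :
        v ∈ Set.Icc t (t + (N + 1) * h) :=
      ⟨hu.1.trans hv.1, by linarith [hu.2, hv.2]⟩
    have hderiv (u : ℝ) (hu : u ∈ Set.Icc t (t + h)) :
        HasDerivWithinAt ((Δ_[h])^[N] (f 0)) ((Δ_[h])^[N] (f 1) u) (Set.Icc t (t + h)) u := by
      refine (hasDerivAt_fwdDiff_iter N fun i hi ↦ hf 0 N.succ_pos _ (hsub hu ?_)).hasDerivWithinAt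
      rw [nsmul_eq_mul]
      exact ⟨le_add_of_nonneg_right (by positivity), by gcongr⟩
    have hbound (u : ℝ) (hu : u ∈ Set.Icc t (t + h)) : ‖(Δ_[h])^[N] (f 1) u‖ ≤ C * h ^ N :=
      ih (f := fun i ↦ f (i + 1)) (fun i hi v hv ↦ hf (i + 1) (by lia) v (hsub hu hv))
        fun v hv ↦ hC v (hsub hu hv)
    have hth : t ≤ t + h := le_add_of_nonneg_right hh
    calc ‖(Δ_[h])^[N + 1] (f 0) t‖ = ‖(Δ_[h])^[N] (f 0) (t + h) - (Δ_[h])^[N] (f 0) t‖ := by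
          rw [Function.iterate_succ_apply', fwdDiff]
      _ ≤ C * h ^ N * ‖t + h - t‖ :=
          (convex_Icc t (t + h)).norm_image_sub_le_of_norm_hasDerivWithin_le
            hderiv hbound ⟨le_rfl, hth⟩ ⟨hth, le_rfl⟩
      _ = C * h ^ (N + 1) := by rw [add_sub_cancel_left, Real.norm_of_nonneg hh]; ring

end ForwardDifference

lemma one_sub_mul_tsum_pow_mul {R : Type*} [DivisionRing R] [TopologicalSpace R]
    [IsTopologicalRing R] [T2Space R] {z : R} {f : ℕ → R} (hf : Summable fun m ↦ z ^ m * f m) :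
    (1 - z) * ∑' m, z ^ m * f m = f 0 + z * ∑' m, z ^ m * Δ_[1] f m := by
  have hshift : Summable fun m ↦ z ^ (m + 1) * f (m + 1) := (summable_nat_add_iff 1).mpr hf
  have hdiff : z * ∑' m, z ^ m * Δ_[1] f m =
      ∑' m, z ^ (m + 1) * f (m + 1) - z * ∑' m, z ^ m * f m := by
    rw [← tsum_mul_left, ← tsum_mul_left, ← hshift.tsum_sub (hf.mul_left z)]
    exact tsum_congr fun m ↦ by rw [fwdDiff, mul_sub, mul_sub, pow_succ', mul_assoc]
  rw [hdiff, sub_mul, one_mul]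
  nth_rw 1 [hf.tsum_eq_zero_add]
  rw [pow_zero, one_mul, add_sub_assoc]

lemma hasSum_of_residueClasses {M : Type*} [AddCommMonoid M] [TopologicalSpace M] [ContinuousAdd M]
    {k : ℕ} (hk : 0 < k) {f : ℕ → M} {S : Fin k → M}
    (h : ∀ j : Fin k, HasSum (fun m ↦ f (m * k + j)) (S j)) : HasSum f (∑ j, S j) := by
  have hclass (j : Fin k) : HasSum (fun n ↦ if n % k = j then f n else 0) (S j) := by
    have hinj : Function.Injective fun m : ℕ ↦ m * k + j := fun m m' hmm' ↦
      Nat.eq_of_mul_eq_mul_right hk (Nat.add_right_cancel hmm')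
    refine (hinj.hasSum_iff fun n hn ↦ if_neg fun hnj ↦ hn ⟨n / k, ?_⟩).mp ?_
    · simpa [← hnj] using Nat.div_add_mod' n k
    · simpa [Function.comp_def, Nat.mod_eq_of_lt] using h j
  convert! hasSum_sum fun j (_ : j ∈ Finset.univ) ↦ hclass j with n
  rw [Finset.sum_eq_single_of_mem ⟨n % k, n.mod_lt hk⟩ (Finset.mem_univ _)]
  · simp
  · exact fun j _ hj ↦ if_neg fun hnj ↦ hj (Fin.ext hnj.symm)

lemma rpow_le_rpow_add_rpow {t p q r : ℝ} (ht : 0 < t) (hpr : p ≤ r) (hrq : r ≤ q) :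
    t ^ r ≤ t ^ p + t ^ q := by
  rcases le_total t 1 with h | h
  · exact (Real.rpow_le_rpow_of_exponent_ge ht h hpr).trans
      (le_add_of_nonneg_right (Real.rpow_nonneg ht.le q))
  · exact (Real.rpow_le_rpow_of_exponent_le h hrq).trans
      (le_add_of_nonneg_left (Real.rpow_nonneg ht.le p))

lemma summable_nat_add_rpow_neg {c p : ℝ} (hc : 0 ≤ c) (hp : 1 < p) :
    Summable fun m : ℕ ↦ (m + c) ^ (-p) := by
  refine ((Real.summable_one_div_nat_add_rpow c p).mpr hp).congr fun m ↦ ?_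
  have hmc : 0 ≤ m + c := by positivity
  rw [abs_of_nonneg hmc, Real.rpow_neg hmc, one_div]

lemma differentiable_const_cpow_neg {c : ℂ} (hc : c ≠ 0) :
    Differentiable ℂ fun s : ℂ ↦ c ^ (-s) :=
  differentiable_neg.const_cpow (.inl hc)

section PowFwdDiff

/-- The `N`-th forward difference with step `1` of `u ↦ u ^ (-s)`, evaluated at the real number `t`:
the coefficients of the series obtained from a Lerch series by summing by parts `N` times. -/
noncomputable def powFwdDiff (N : ℕ) (s : ℂ) (t : ℝ) : ℂ :=
  (Δ_[1])^[N] (fun u : ℝ ↦ (u : ℂ) ^ (-s)) t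

lemma powFwdDiff_zero (s : ℂ) (t : ℝ) : powFwdDiff 0 s t = (t : ℂ) ^ (-s) := rfl

lemma powFwdDiff_succ (N : ℕ) (s : ℂ) (t : ℝ) :
    powFwdDiff (N + 1) s t = powFwdDiff N s (t + 1) - powFwdDiff N s t :=
  congrFun (Function.iterate_succ_apply' _ _ _) t

lemma differentiable_powFwdDiff (N : ℕ) {t : ℝ} (ht : 0 < t) :
    Differentiable ℂ fun s ↦ powFwdDiff N s t := by
  simp only [powFwdDiff, fwdDiff_iter_eq_sum_shift]
  refine Differentiable.fun_sum fun i _ ↦ ?_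
  exact (differentiable_const_cpow_neg (Complex.ofReal_ne_zero.mpr (by positivity))).const_smul _

lemma hasDerivAt_descPochhammer_mul_cpow (r : ℂ) {t : ℝ} (ht : 0 < t) (i : ℕ) :
    HasDerivAt (fun u : ℝ ↦ (descPochhammer ℂ i).eval r * (u : ℂ) ^ (r - i))
      ((descPochhammer ℂ (i + 1)).eval r * (t : ℂ) ^ (r - (i + 1 : ℕ))) t := by
  have hcpow := ((Complex.hasStrictDerivAt_cpow_const (c := r - i)
    (Complex.ofReal_mem_slitPlane.mpr ht)).hasDerivAt.comp_ofReal).const_mul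
      ((descPochhammer ℂ i).eval r)
  convert! hcpow using 1
  rw [descPochhammer_succ_eval, mul_assoc, Nat.cast_succ, sub_add_eq_sub_sub]

lemma norm_powFwdDiff_le {N : ℕ} {s : ℂ} {t : ℝ} (ht : 0 < t) (hs : 0 ≤ s.re + N) :
    ‖powFwdDiff N s t‖ ≤ ‖(descPochhammer ℂ N).eval (-s)‖ * t ^ (-(s.re + N)) := by
  have hpos {u : ℝ} (hu : u ∈ Set.Icc t (t + N * 1)) : 0 < u := ht.trans_le hu.1
  have hbound (u : ℝ) (hu : u ∈ Set.Icc t (t + N * 1)) :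
      ‖(descPochhammer ℂ N).eval (-s) * (u : ℂ) ^ (-s - N)‖ ≤
        ‖(descPochhammer ℂ N).eval (-s)‖ * t ^ (-(s.re + N)) := by
    have hre : (-s - N).re = -(s.re + N) := by simp; ring
    rw [norm_mul, Complex.norm_cpow_eq_rpow_re_of_pos (hpos hu), hre]
    gcongr ?_ * ?_
    exact Real.rpow_le_rpow_of_nonpos ht hu.1 (neg_nonpos.mpr hs)
  simpa [powFwdDiff] using norm_fwdDiff_iter_le zero_le_one N
    (fun i _ u hu ↦ hasDerivAt_descPochhammer_mul_cpow (-s) (hpos hu) i) hbound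

end PowFwdDiff

section Lerch

variable {z : ℂ} {c : ℝ} {N : ℕ} {s : ℂ}

/-- The Lerch series `∑ m, z ^ m * (m + c) ^ (-s)` with the powers replaced by their `N`-th forward
differences; `N = 0` is the Lerch series itself. -/
noncomputable def lerchFwdDiffSeries (z : ℂ) (c : ℝ) (N : ℕ) (s : ℂ) : ℂ :=
  ∑' m : ℕ, z ^ m * powFwdDiff N s (m + c)

lemma norm_pow_mul_powFwdDiff_le (hz : ‖z‖ ≤ 1) (hc : 0 < c) (hs : 0 ≤ s.re + N) (m : ℕ) :
    ‖z ^ m * powFwdDiff N s (m + c)‖ ≤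
      ‖(descPochhammer ℂ N).eval (-s)‖ * (m + c) ^ (-(s.re + N)) := by
  rw [norm_mul, norm_pow]
  exact (mul_le_of_le_one_left (norm_nonneg _) (pow_le_one₀ (norm_nonneg z) hz)).trans
    (norm_powFwdDiff_le (by positivity) hs)

lemma summable_pow_mul_powFwdDiff (hz : ‖z‖ ≤ 1) (hc : 0 < c) (hs : 1 < s.re + N) :
    Summable fun m : ℕ ↦ z ^ m * powFwdDiff N s (m + c) :=
  .of_norm_bounded ((summable_nat_add_rpow_neg hc.le hs).mul_left _)
    (norm_pow_mul_powFwdDiff_le hz hc (by linarith))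

lemma differentiableAt_lerchFwdDiffSeries (hz : ‖z‖ ≤ 1) (hc : 0 < c) (hs : 1 < s.re + N) :
    DifferentiableAt ℂ (lerchFwdDiffSeries z c N) s := by
  obtain ⟨p, hp, hps⟩ := exists_between hs
  obtain ⟨q, hsq⟩ := exists_gt (s.re + N)
  obtain ⟨B, hsB⟩ := exists_gt ‖(descPochhammer ℂ N).eval (-s)‖
  let U : Set ℂ :=
    {w | p < w.re + N} ∩ {w | w.re + N < q} ∩ {w | ‖(descPochhammer ℂ N).eval (-w)‖ < B}
  have hU : IsOpen U :=
    ((isOpen_lt (by fun_prop) (by fun_prop)).inter (isOpen_lt (by fun_prop) (by fun_prop))).inter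
      (isOpen_lt ((descPochhammer ℂ N).continuous.comp continuous_neg).norm continuous_const)
  have hsummable : Summable fun m : ℕ ↦ B * ((m + c) ^ (-q) + (m + c) ^ (-p)) :=
    ((summable_nat_add_rpow_neg hc.le (by linarith)).add
      (summable_nat_add_rpow_neg hc.le hp)).mul_left B
  have hbound (m : ℕ) (w : ℂ) (hw : w ∈ U) :
      ‖z ^ m * powFwdDiff N w (m + c)‖ ≤ B * ((m + c) ^ (-q) + (m + c) ^ (-p)) := by
    obtain ⟨⟨hpw, hwq⟩, hwB⟩ : (p < w.re + N ∧ w.re + N < q) ∧ _ := hw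
    refine (norm_pow_mul_powFwdDiff_le hz hc (by linarith) m).trans ?_
    gcongr
    · exact (norm_nonneg _).trans hsB.le
    · exact hwB.le
    · exact rpow_le_rpow_add_rpow (by positivity) (by linarith) (by linarith)
  exact (Complex.differentiableOn_tsum_of_summable_norm hsummable
    (fun m ↦ ((differentiable_powFwdDiff N (by positivity)).const_mul _).differentiableOn)
    hU hbound).differentiableAt (hU.mem_nhds ⟨⟨hps, hsq⟩, hsB⟩)

lemma one_sub_mul_lerchFwdDiffSeries (hz : ‖z‖ ≤ 1) (hc : 0 < c) (hs : 1 < s.re + N) :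
    (1 - z) * lerchFwdDiffSeries z c N s =
      powFwdDiff N s c + z * lerchFwdDiffSeries z c (N + 1) s := by
  have hdiff (m : ℕ) : Δ_[1] (fun i : ℕ ↦ powFwdDiff N s (i + c)) m =
      powFwdDiff (N + 1) s (m + c) := by
    simp only [fwdDiff, powFwdDiff_succ, Nat.cast_succ, add_right_comm]
  simpa only [lerchFwdDiffSeries, hdiff, Nat.cast_zero, zero_add] using
    one_sub_mul_tsum_pow_mul (summable_pow_mul_powFwdDiff hz hc hs)

/-- The Lerch series after `N` summations by parts (its `N`-th Euler transform): boundary terms plus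
a remainder series which converges for `Re s > 1 - N`. -/
noncomputable def lerchEulerTransform (z : ℂ) (c : ℝ) (N : ℕ) (s : ℂ) : ℂ :=
  ∑ i ∈ Finset.range N, z ^ i / (1 - z) ^ (i + 1) * powFwdDiff i s c +
    (z / (1 - z)) ^ N * lerchFwdDiffSeries z c N s

lemma lerchEulerTransform_zero : lerchEulerTransform z c 0 s = lerchFwdDiffSeries z c 0 s := by
  simp [lerchEulerTransform]

lemma lerchEulerTransform_succ (hz : ‖z‖ ≤ 1) (hz1 : z ≠ 1) (hc : 0 < c) (hs : 1 < s.re + N) :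
    lerchEulerTransform z c (N + 1) s = lerchEulerTransform z c N s := by
  have h1z : 1 - z ≠ 0 := sub_ne_zero.mpr hz1.symm
  have hseries : lerchFwdDiffSeries z c N s =
      (powFwdDiff N s c + z * lerchFwdDiffSeries z c (N + 1) s) / (1 - z) :=
    eq_div_of_mul_eq h1z (by rw [mul_comm, one_sub_mul_lerchFwdDiffSeries hz hc hs])
  rw [lerchEulerTransform, lerchEulerTransform, Finset.sum_range_succ, hseries, add_assoc,
    div_pow, div_pow]
  congr 1
  field

lemma lerchEulerTransform_eq_of_le (hz : ‖z‖ ≤ 1) (hz1 : z ≠ 1) (hc : 0 < c) {M : ℕ} (hNM : N ≤ M)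
    (hs : 1 < s.re + N) : lerchEulerTransform z c M s = lerchEulerTransform z c N s := by
  induction M, hNM using Nat.le_induction with
  | base => rfl
  | succ M hNM ih =>
    have hNM' : (N : ℝ) ≤ M := Nat.cast_le.mpr hNM
    rw [lerchEulerTransform_succ hz hz1 hc (by linarith), ih]

lemma differentiableAt_lerchEulerTransform (hz : ‖z‖ ≤ 1) (hc : 0 < c) (hs : 1 < s.re + N) :
    DifferentiableAt ℂ (lerchEulerTransform z c N) s :=
  .add (.fun_sum fun i _ ↦ ((differentiable_powFwdDiff i hc) s).const_mul _)
    ((differentiableAt_lerchFwdDiffSeries hz hc hs).const_mul _)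

/-- The entire continuation of the Lerch series for `z ≠ 1`. At `s` it takes the value of an Euler
transform of order `N` large enough that `Re s > 1 - N`; the order does not matter, by
`lerchContinuation_eq`. -/
noncomputable def lerchContinuation (z : ℂ) (c : ℝ) (s : ℂ) : ℂ :=
  lerchEulerTransform z c (⌊1 - s.re⌋₊ + 1) s

lemma lerchContinuation_eq (hz : ‖z‖ ≤ 1) (hz1 : z ≠ 1) (hc : 0 < c) (hs : 1 < s.re + N) :
    lerchContinuation z c s = lerchEulerTransform z c N s := by
  have hfloor : 1 < s.re + (⌊1 - s.re⌋₊ + 1 : ℕ) := by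
    have := Nat.lt_floor_add_one (1 - s.re)
    push_cast
    linarith
  rcases le_total N (⌊1 - s.re⌋₊ + 1) with h | h
  · exact lerchEulerTransform_eq_of_le hz hz1 hc h hs
  · exact (lerchEulerTransform_eq_of_le hz hz1 hc h hfloor).symm

lemma differentiable_lerchContinuation (hz : ‖z‖ ≤ 1) (hz1 : z ≠ 1) (hc : 0 < c) :
    Differentiable ℂ (lerchContinuation z c) := by
  intro s
  obtain ⟨N, hN⟩ := exists_nat_gt (1 - s.re)
  have hs : 1 < s.re + N := by linarith
  refine (differentiableAt_lerchEulerTransform hz hc hs).congr_of_eventuallyEq ?_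
  have hU : IsOpen {w : ℂ | 1 < w.re + N} := isOpen_lt (by fun_prop) (by fun_prop)
  filter_upwards [hU.mem_nhds hs] with w hw using lerchContinuation_eq hz hz1 hc hw

lemma hasSum_lerchContinuation (hz : ‖z‖ ≤ 1) (hz1 : z ≠ 1) (hc : 0 < c) (hs : 1 < s.re) :
    HasSum (fun m : ℕ ↦ z ^ m * ((m + c : ℝ) : ℂ) ^ (-s)) (lerchContinuation z c s) := by
  have hs0 : 1 < s.re + (0 : ℕ) := by simpa using hs
  rw [lerchContinuation_eq hz hz1 hc hs0, lerchEulerTransform_zero]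
  simpa only [lerchFwdDiffSeries, powFwdDiff_zero] using
    (summable_pow_mul_powFwdDiff hz hc hs0).hasSum

end Lerch

lemma tendsto_sub_one_mul_nhdsNE {F : ℂ → ℂ} (hF : Continuous F) :
    Tendsto (fun s ↦ (s - 1) * F s) (𝓝[≠] 1) (𝓝 0) := by
  have hcont : Continuous fun s ↦ (s - 1) * F s := by fun_prop
  exact (hcont.tendsto' 1 0 (by simp)).mono_left nhdsWithin_le_nhds

/-- The series of functions `∑ n, u n s` converges for `Re s > 1`, and its sum extends analytically
to `ℂ \ {1}` with at worst a simple pole at `s = 1`, of residue `r`. -/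
def HasContinuationWithResidue (u : ℕ → ℂ → ℂ) (r : ℂ) : Prop :=
  ∃ F : ℂ → ℂ, AnalyticOnNhd ℂ F {s | s ≠ 1} ∧
    (∀ s : ℂ, 1 < s.re → HasSum (fun n ↦ u n s) (F s)) ∧
    Tendsto (fun s ↦ (s - 1) * F s) (𝓝[≠] 1) (𝓝 r)

namespace HasContinuationWithResidue

variable {u : ℕ → ℂ → ℂ} {r : ℂ}

lemma of_differentiable {F : ℂ → ℂ} (hF : Differentiable ℂ F)
    (hsum : ∀ s : ℂ, 1 < s.re → HasSum (fun n ↦ u n s) (F s)) :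
    HasContinuationWithResidue u 0 :=
  ⟨F, fun s _ ↦ hF.analyticAt s, hsum, tendsto_sub_one_mul_nhdsNE hF.continuous⟩

lemma mul_left (h : HasContinuationWithResidue u r) {g : ℂ → ℂ} (hg : Differentiable ℂ g) :
    HasContinuationWithResidue (fun n s ↦ g s * u n s) (g 1 * r) := by
  obtain ⟨F, hF, hsum, hres⟩ := h
  refine ⟨fun s ↦ g s * F s, fun s hs ↦ (hg.analyticAt s).mul (hF s hs),
    fun s hs ↦ (hsum s hs).mul_left _, ?_⟩
  have hg1 : Tendsto g (𝓝[≠] 1) (𝓝 (g 1)) := (hg.continuous.tendsto 1).mono_left nhdsWithin_le_nhds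
  simpa only [mul_left_comm] using hg1.mul hres

lemma nat_add (h : HasContinuationWithResidue u r) (n : ℕ)
    (hu : ∀ i < n, Differentiable ℂ (u i)) :
    HasContinuationWithResidue (fun m ↦ u (m + n)) r := by
  obtain ⟨F, hF, hsum, hres⟩ := h
  have hG : Differentiable ℂ fun s ↦ ∑ i ∈ Finset.range n, u i s :=
    .fun_sum fun i hi ↦ hu i (Finset.mem_range.mp hi)
  refine ⟨fun s ↦ F s - ∑ i ∈ Finset.range n, u i s, fun s hs ↦ (hF s hs).sub (hG.analyticAt s),
    fun s hs ↦ (hasSum_nat_add_iff' n).mpr (hsum s hs), ?_⟩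
  simpa only [mul_sub, sub_zero] using hres.sub (tendsto_sub_one_mul_nhdsNE hG.continuous)

lemma of_residueClasses {k : ℕ} (hk : 0 < k) {r : Fin k → ℂ}
    (h : ∀ j : Fin k, HasContinuationWithResidue (fun m ↦ u (m * k + j)) (r j)) :
    HasContinuationWithResidue u (∑ j, r j) := by
  choose F hF hsum hres using h
  refine ⟨fun s ↦ ∑ j, F j s, fun s hs ↦ Finset.univ.analyticAt_fun_sum fun j _ ↦ hF j s hs,
    fun s hs ↦ hasSum_of_residueClasses hk fun j ↦ hsum j s hs, ?_⟩
  simpa only [Finset.mul_sum] using tendsto_finsetSum Finset.univ fun j _ ↦ hres j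

end HasContinuationWithResidue

lemma hasContinuationWithResidue_hurwitz_of_le_one {c : ℝ} (hc : 0 < c) (hc1 : c ≤ 1) :
    HasContinuationWithResidue (fun m s ↦ ((m + c : ℝ) : ℂ) ^ (-s)) 1 := by
  refine ⟨HurwitzZeta.hurwitzZeta c, ?_, fun s hs ↦ ?_, HurwitzZeta.hurwitzZeta_residue_one c⟩
  · exact DifferentiableOn.analyticOnNhd (fun s hs ↦
      (HurwitzZeta.differentiableAt_hurwitzZeta c hs).differentiableWithinAt) isOpen_ne
  · simpa [Complex.cpow_neg] using HurwitzZeta.hasSum_hurwitzZeta_of_one_lt_re ⟨hc.le, hc1⟩ hs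

lemma hasContinuationWithResidue_hurwitz {c : ℝ} (hc : 0 < c) :
    HasContinuationWithResidue (fun m s ↦ ((m + c : ℝ) : ℂ) ^ (-s)) 1 := by
  obtain ⟨n, hn⟩ : ∃ n, ⌈c⌉₊ = n + 1 := Nat.exists_eq_succ_of_ne_zero (Nat.ceil_pos.mpr hc).ne'
  obtain ⟨hnc, hcn⟩ : n < c ∧ c ≤ n + 1 := by simpa using (Nat.ceil_eq_iff n.succ_ne_zero).mp hn
  have hcn0 : 0 < c - n := sub_pos.mpr hnc
  have hhurwitz := hasContinuationWithResidue_hurwitz_of_le_one hcn0 (by linarith)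
  simpa [add_assoc] using hhurwitz.nat_add n fun i _ ↦
    differentiable_const_cpow_neg (Complex.ofReal_ne_zero.mpr (by positivity))

open Classical in
lemma hasContinuationWithResidue_lerch {z : ℂ} (hz : ‖z‖ ≤ 1) {c : ℝ} (hc : 0 < c) :
    HasContinuationWithResidue (fun m s ↦ z ^ m * ((m + c : ℝ) : ℂ) ^ (-s))
      (if z = 1 then 1 else 0) := by
  split_ifs with hz1
  · simpa [hz1] using hasContinuationWithResidue_hurwitz hc
  · exact .of_differentiable (differentiable_lerchContinuation hz hz1 hc)
      fun s hs ↦ hasSum_lerchContinuation hz hz1 hc hs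

lemma norm_exp_two_pi_I_mul_le_one {w : ℂ} (hw : 0 ≤ w.im) :
    ‖Complex.exp (2 * Real.pi * Complex.I * w)‖ ≤ 1 := by
  have hre : (2 * Real.pi * Complex.I * w).re = -(2 * Real.pi * w.im) := by simp
  rw [Complex.norm_exp, hre, Real.exp_le_one_iff, neg_nonpos]
  positivity

lemma exp_two_pi_I_mul_eq_one_iff {w : ℂ} :
    Complex.exp (2 * Real.pi * Complex.I * w) = 1 ↔ ∃ m : ℤ, w = m := by
  simp only [Complex.exp_eq_one_iff, mul_comm _ w, mul_left_inj' Complex.two_pi_I_ne_zero]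

/-- The `n`-th term, with `n` counted from `0`, of the `k`-periodic Lerch–Lipschitz zeta series
`ζ_k(a, x, s)`. -/
noncomputable def periodicLerchTerm {k : ℕ} (hk : 0 < k) (a : Fin k → ℂ) (x : Fin k → ℝ) (n : ℕ)
    (s : ℂ) : ℂ :=
  Complex.exp (2 * Real.pi * Complex.I * ((n : ℂ) + 1) * a ⟨n % k, Nat.mod_lt n hk⟩) *
    ((((n : ℝ) + 1 + x ⟨n % k, Nat.mod_lt n hk⟩ : ℝ)) : ℂ) ^ (-s)

lemma periodicLerchTerm_mul_add {k : ℕ} (hk : 0 < k) (a : Fin k → ℂ) {x : Fin k → ℝ} {j : Fin k}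
    (hx : 0 ≤ (j : ℝ) + 1 + x j) (m : ℕ) (s : ℂ) :
    periodicLerchTerm hk a x (m * k + j) s =
      Complex.exp (2 * Real.pi * Complex.I * ((j : ℂ) + 1) * a j) * (k : ℂ) ^ (-s) *
        (Complex.exp (2 * Real.pi * Complex.I * (k * a j)) ^ m *
          ((m + (j + 1 + x j) / k : ℝ) : ℂ) ^ (-s)) := by
  have hmod : (⟨(m * k + j) % k, Nat.mod_lt _ hk⟩ : Fin k) = j :=
    Fin.ext (Nat.mul_add_mod_of_lt j.isLt)
  have hexp : Complex.exp (2 * Real.pi * Complex.I * (((m * k + j : ℕ) : ℂ) + 1) * a j) =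
      Complex.exp (2 * Real.pi * Complex.I * ((j : ℂ) + 1) * a j) *
        Complex.exp (2 * Real.pi * Complex.I * (k * a j)) ^ m := by
    rw [← Complex.exp_nat_mul, ← Complex.exp_add]
    push_cast
    ring_nf
  have hbase : ((m * k + j : ℕ) : ℝ) + 1 + x j = k * (m + (j + 1 + x j) / k) := by
    push_cast
    field_simp
    ring
  rw [periodicLerchTerm, hmod, hexp, hbase, Complex.ofReal_mul,
    Complex.mul_cpow_ofReal_nonneg (by positivity) (by positivity), Complex.ofReal_natCast]
  ring

open Classical in
theorem zeta_k_simple_pole_of_in_Zk_general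
    (k : ℕ) (hk : 0 < k)
    (a : Fin k → ℂ) (haIm : ∀ j, 0 ≤ (a j).im)
    (x : Fin k → ℝ) (hx : ∀ j : Fin k, 0 < (j : ℝ) + 1 + x j) :
    HasContinuationWithResidue (periodicLerchTerm hk a x)
      ((1 / (k : ℂ)) * ∑ j : Fin k,
        if ∃ m : ℤ, (k : ℂ) * a j = (m : ℂ) then
          Complex.exp (2 * Real.pi * Complex.I * ((j : ℂ) + 1) * a j)
        else 0) := by
  have hclass (j : Fin k) : HasContinuationWithResidue
      (fun m ↦ periodicLerchTerm hk a x (m * k + j))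
      (1 / (k : ℂ) * if ∃ m : ℤ, (k : ℂ) * a j = (m : ℂ) then
        Complex.exp (2 * Real.pi * Complex.I * ((j : ℂ) + 1) * a j) else 0) := by
    have hIm : 0 ≤ ((k : ℂ) * a j).im := by simpa using mul_nonneg k.cast_nonneg (haIm j)
    have hfactor : Differentiable ℂ fun s : ℂ ↦
        Complex.exp (2 * Real.pi * Complex.I * ((j : ℂ) + 1) * a j) * (k : ℂ) ^ (-s) :=
      (differentiable_const_cpow_neg (Nat.cast_ne_zero.mpr hk.ne')).const_mul _
    have hlerch := (hasContinuationWithResidue_lerch (norm_exp_two_pi_I_mul_le_one hIm)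
      (div_pos (hx j) (Nat.cast_pos.mpr hk))).mul_left hfactor
    convert! hlerch using 1
    · funext m s
      exact periodicLerchTerm_mul_add hk a (hx j).le m s
    · simp only [exp_two_pi_I_mul_eq_one_iff, Complex.cpow_neg_one, one_div]
      split_ifs <;> ring
  rw [Finset.mul_sum]
  exact .of_residueClasses hk hclass

open Classical in
/-- If some `a j` lies in `ℤ[1/k]`, the `k`-periodic Lerch–Lipschitz zeta function
`ζ_k(a, x, s)` (real nonnegative `x`) extends meromorphically to `ℂ` with at worst a
simple pole at `s = 1` of residue `(1/k) ∑_{a_j ∈ ℤ[1/k]} e^{2πi j a_j}`. -/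
theorem zeta_k_simple_pole_of_in_Zk
    (k : ℕ) (hk : 0 < k)
    (a : Fin k → ℂ) (haIm : ∀ j, 0 ≤ (a j).im)
    (haZ : ∃ j : Fin k, ∃ m : ℤ, (k : ℂ) * a j = (m : ℂ))
    (x : Fin k → ℝ) (hx : ∀ j, 0 ≤ x j) :
    ∃ F : ℂ → ℂ, AnalyticOnNhd ℂ F {s : ℂ | s ≠ 1} ∧
      (∀ s : ℂ, 1 < s.re →
        F s = ∑' n : ℕ,
          Complex.exp (2 * Real.pi * Complex.I * ((n : ℂ) + 1) *
              a ⟨n % k, Nat.mod_lt n hk⟩) *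
            ((((n : ℝ) + 1 + x ⟨n % k, Nat.mod_lt n hk⟩ : ℝ)) : ℂ) ^ (-s)) ∧
      Filter.Tendsto (fun s : ℂ => (s - 1) * F s) (nhdsWithin 1 {(1 : ℂ)}ᶜ)
        (nhds ((1 / (k : ℂ)) * ∑ j : Fin k,
          if ∃ m : ℤ, (k : ℂ) * a j = (m : ℂ) then
            Complex.exp (2 * Real.pi * Complex.I * ((j : ℂ) + 1) * a j)
          else 0)) := by
  obtain ⟨F, hF, hsum, hres⟩ := zeta_k_simple_pole_of_in_Zk_general k hk a haIm x
    fun j ↦ by have := hx j; positivity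
  exact ⟨F, hF, fun s hs ↦ (hsum s hs).tsum_eq.symm, hres⟩
end

section
/- Fix an integer k ≥ 1 and a : Fin k → ℂ with Im(a j) ≥ 0 and k·(a j) ∉ ℤ for every j. Let Ω := {z : Fin k → ℂ : for every j, (j+1) + z j is not a real number ≤ 0} (equivalently, z j avoids the real ray (−∞, −(j+1)], where j+1 is the 1-based index; this guarantees that n + z_{ι(n)} avoids the closed negative real axis for every n ≥ 1). Then Ω is open in Fin k → ℂ and there exists a function F : (Fin k → ℂ) × ℂ → ℂ that is analytic on Ω × ℂ and satisfies F(z, s) = Σ_{n=1}^∞ exp(2πi·n·a_{ι(n)}) · (n + z_{ι(n)})^{−s} (principal-branch complex powers) for every z ∈ Ω and every s with Re s > 1. -/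
/-!
Splitting the series into residue classes modulo `k` and extracting the factor `k ^ (-s)` reduces
the claim to the Lerch series `∑ q ^ m * (w + m) ^ (-s)` with `‖q‖ ≤ 1` and `q ≠ 1`. Summation by
parts gives `(1 - q) * ∑ q ^ m * f m = f 0 + q * ∑ q ^ m * (f (m + 1) - f m)`, and each forward
difference of `x ↦ x ^ (-s)` gains one power of decay, so `N` summations by parts continue the
series to `1 - N < re s`. Joint analyticity in `(w, s)` is Osgood's lemma, obtained from Cauchy's
integral formula by reading the Cauchy kernel as the resolvent of the coordinate function in the
Banach algebra of continuous functions on a circle.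
-/

open Complex Filter Metric Set Topology
open scoped Real

section ContinuousMap

variable {X R F : Type*} [TopologicalSpace X] [CompactSpace X] [NormedRing R]
  [NormedAddCommGroup F] [Module R F]

instance isScalarTower_continuousMap {𝕜 : Type*} [NormedField 𝕜] [NormedAlgebra 𝕜 R]
    [NormedSpace 𝕜 F] [IsBoundedSMul R F] [IsScalarTower 𝕜 R F] :
    IsScalarTower 𝕜 C(X, R) C(X, F) :=
  ⟨fun r f g ↦ ContinuousMap.ext fun x ↦ smul_assoc r (f x) (g x)⟩

instance isBoundedSMul_continuousMap [IsBoundedSMul R F] : IsBoundedSMul C(X, R) C(X, F) :=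
  IsBoundedSMul.of_norm_smul_le fun f g ↦ (ContinuousMap.norm_le _ (by positivity)).2 fun x ↦ by
    rw [ContinuousMap.smul_apply']
    refine (norm_smul_le _ _).trans ?_
    gcongr <;> exact ContinuousMap.norm_coe_le_norm _ x

end ContinuousMap

section Osgood

variable {X F : Type*} [TopologicalSpace X] [NormedAddCommGroup F] [NormedSpace ℂ F]

theorem circleIntegral_clm_comp_comm {E : Type*} [NormedAddCommGroup E] [NormedSpace ℂ E]
    [CompleteSpace E] [CompleteSpace F] (L : E →L[ℂ] F) {f : ℂ → E} {c : ℂ} {R : ℝ}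
    (hf : CircleIntegrable f c R) :
    ∮ z in C(c, R), L (f z) = L (∮ z in C(c, R), f z) := by
  simp only [circleIntegral, ← map_smul]
  exact L.intervalIntegral_comp_comm hf.out

theorem analyticAt_resolvent {A : Type*} [NormedRing A] [NormedAlgebra ℂ A] [CompleteSpace A]
    {a : A} {z : ℂ} (hz : z ∈ resolventSet ℂ a) : AnalyticAt ℂ (resolvent a) z :=
  DifferentiableOn.analyticAt
    (fun _ hw ↦ (spectrum.hasDerivAt_resolvent_const_left hw).differentiableAt
      |>.differentiableWithinAt)
    ((spectrum.isOpen_resolventSet a).mem_nhds hz)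

theorem mem_resolventSet_continuousMap {γ : C(X, ℂ)} {z : ℂ} (hz : z ∉ range γ) :
    z ∈ resolventSet ℂ γ := by
  rwa [← ContinuousMap.spectrum_eq_range, spectrum.notMem_iff] at hz

theorem resolvent_continuousMap_apply {γ : C(X, ℂ)} {z : ℂ} (hz : z ∉ range γ) (x : X) :
    resolvent γ z x = (z - γ x)⁻¹ :=
  eq_inv_of_mul_eq_one_left <|
    DFunLike.congr_fun (Ring.inverse_mul_cancel _ (mem_resolventSet_continuousMap hz)) x

theorem inv_smul_circleIntegral_sub_inv_smul [CompleteSpace F] {f : ℂ → F} {c w : ℂ} {R : ℝ}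
    (hf : DifferentiableOn ℂ f (closedBall c R)) (hw : w ∈ ball c R) :
    (2 * π * I : ℂ)⁻¹ • ∮ z in C(c, R), (z - w)⁻¹ • f z = f w :=
  (hf.mono closure_ball_subset_closedBall).diffContOnCl
    |>.two_pi_i_inv_smul_circleIntegral_sub_inv_smul hw

variable [CompactSpace X]

theorem analyticOnNhd_of_differentiableOn_eval [CompleteSpace F] {Φ : ℂ → C(X, F)} {U : Set ℂ}
    (hU : IsOpen U) (hΦ : ContinuousOn Φ U)
    (hd : ∀ x, DifferentiableOn ℂ (fun w ↦ Φ w x) U) : AnalyticOnNhd ℂ Φ U := by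
  intro w₀ hw₀
  obtain ⟨R, hR, hsub⟩ := nhds_basis_closedBall.mem_iff.1 (hU.mem_nhds hw₀)
  lift R to NNReal using hR.le
  have hsphere : ContinuousOn Φ (sphere w₀ R) := hΦ.mono (sphere_subset_closedBall.trans hsub)
  refine (hasFPowerSeriesOn_cauchy_integral
    (hsphere.circleIntegrable R.2) hR).analyticAt.congr ?_
  filter_upwards [ball_mem_nhds w₀ hR] with w hw
  have hkernel : ContinuousOn (fun ξ ↦ (ξ - w)⁻¹ • Φ ξ) (sphere w₀ R) :=
    ((continuous_sub_right w).continuousOn.inv₀ fun ξ hξ h ↦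
      (mem_ball.1 hw).ne (sub_eq_zero.1 h ▸ hξ)).smul hsphere
  ext x
  have heval := circleIntegral_clm_comp_comm (ContinuousMap.evalCLM ℂ x)
    (hkernel.circleIntegrable R.2)
  rw [← inv_smul_circleIntegral_sub_inv_smul ((hd x).mono hsub) hw]
  exact congrArg ((2 * π * I : ℂ)⁻¹ • ·) heval.symm

/-- The circle integral as a continuous linear functional of the integrand's restriction to the
circle. -/
noncomputable def circleIntegralCLM (c : ℂ) {R : ℝ} (hR : 0 ≤ R) :
    C(sphere c R, F) →L[ℂ] F :=
  LinearMap.mkContinuous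
    { toFun g := ∫ θ in 0..2 * π, deriv (circleMap c R) θ • g ⟨_, circleMap_mem_sphere c hR θ⟩
      map_add' g h := by
        simp only [ContinuousMap.add_apply, smul_add]
        refine intervalIntegral.integral_add ?_ ?_ <;>
        exact Continuous.intervalIntegrable (by simp only [deriv_circleMap]; fun_prop) _ _
      map_smul' r g := by
        simp only [ContinuousMap.smul_apply, smul_comm _ r, intervalIntegral.integral_smul,
          RingHom.id_apply] }
    (R * (2 * π)) fun g ↦ by
      refine (intervalIntegral.norm_integral_le_of_norm_le_const (C := R * ‖g‖)
        fun θ _ ↦ ?_).trans_eq (by rw [sub_zero, abs_of_pos Real.two_pi_pos]; ring)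
      rw [norm_smul, deriv_circleMap, norm_mul, norm_circleMap_zero, norm_I, mul_one,
        abs_of_nonneg hR]
      gcongr
      exact g.norm_coe_le_norm _

theorem circleIntegralCLM_apply {c : ℂ} {R : ℝ} (hR : 0 ≤ R) {g : C(sphere c R, F)} {f : ℂ → F}
    (hgf : ∀ z : sphere c R, g z = f z) : circleIntegralCLM c hR g = ∮ z in C(c, R), f z := by
  simp only [circleIntegralCLM, LinearMap.mkContinuous_apply, LinearMap.coe_mk, AddHom.coe_mk,
    circleIntegral, hgf]

theorem exists_analyticOnNhd_continuousMap [CompleteSpace F] {f : ℂ → X → F} {U : Set ℂ}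
    (hU : IsOpen U) (hf : ContinuousOn (Function.uncurry f) (U ×ˢ univ))
    (hd : ∀ x, DifferentiableOn ℂ (f · x) U) :
    ∃ Φ : ℂ → C(X, F), AnalyticOnNhd ℂ Φ U ∧ ∀ w ∈ U, ⇑(Φ w) = f w := by
  let Φ : ℂ → C(X, F) := fun w ↦ ContinuousMap.mkD (f w) 0
  have hΦ (w) (hw : w ∈ U) : ⇑(Φ w) = f w :=
    congrArg DFunLike.coe <| ContinuousMap.mkD_of_continuous <|
      hf.comp_continuous (f := fun x ↦ (w, x)) (by fun_prop) fun x ↦ ⟨hw, mem_univ x⟩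
  refine ⟨Φ, analyticOnNhd_of_differentiableOn_eval hU
    (ContinuousMap.continuousOn_mkD_of_uncurry _ _ hf) fun x ↦ (hd x).congr fun w hw ↦ ?_, hΦ⟩
  rw [hΦ w hw]

/-- **Osgood's lemma** in two variables. -/
theorem analyticOnNhd_of_continuousOn_of_differentiableAt_slices [CompleteSpace F]
    {f : ℂ × ℂ → F} {U : Set (ℂ × ℂ)} (hU : IsOpen U) (hf : ContinuousOn f U)
    (hfst : ∀ p ∈ U, DifferentiableAt ℂ (fun w ↦ f (w, p.2)) p.1)
    (hsnd : ∀ p ∈ U, DifferentiableAt ℂ (fun s ↦ f (p.1, s)) p.2) : AnalyticOnNhd ℂ f U := by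
  rintro ⟨w₀, s₀⟩ h₀
  obtain ⟨R, hR, hsub⟩ := nhds_basis_closedBall.mem_iff.1 (hU.mem_nhds h₀)
  rw [← closedBall_prod_same] at hsub
  have hmem {w η : ℂ} (hw : w ∈ ball w₀ R) (hη : η ∈ closedBall s₀ R) : (w, η) ∈ U :=
    hsub ⟨ball_subset_closedBall hw, hη⟩
  obtain ⟨Φ, hΦ, hΦf⟩ := exists_analyticOnNhd_continuousMap (X := sphere s₀ R)
    (f := fun w η ↦ f (w, η)) isOpen_ball
    (hf.comp (f := fun p : ℂ × sphere s₀ R ↦ (p.1, (p.2 : ℂ))) (by fun_prop)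
      fun p hp ↦ hmem hp.1 (sphere_subset_closedBall p.2.2))
    fun η w hw ↦
      (hfst _ (hmem hw (sphere_subset_closedBall η.2))).differentiableWithinAt
  let ι : C(sphere s₀ R, ℂ) := ⟨Subtype.val, continuous_subtype_val⟩
  have hι {s : ℂ} (hs : s ∈ ball s₀ R) : s ∉ range ι := by
    rintro ⟨η, rfl⟩
    exact (mem_ball.1 hs).ne η.2
  have hcauchy : f =ᶠ[𝓝 (w₀, s₀)] fun p ↦
      (2 * π * I : ℂ)⁻¹ • circleIntegralCLM s₀ hR.le (-resolvent ι p.2 • Φ p.1) := by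
    filter_upwards [prod_mem_nhds (ball_mem_nhds w₀ hR) (ball_mem_nhds s₀ hR)] with ⟨w, s⟩ ⟨hw, hs⟩
    rw [circleIntegralCLM_apply (f := fun η ↦ (η - s)⁻¹ • f (w, η)),
      inv_smul_circleIntegral_sub_inv_smul (f := fun η ↦ f (w, η)) _ hs]
    · exact fun η hη ↦ (hsnd (w, η) (hmem hw hη)).differentiableWithinAt
    · intro η
      rw [ContinuousMap.smul_apply', ContinuousMap.neg_apply, hΦf w hw,
        resolvent_continuousMap_apply (hι hs), ← inv_neg, neg_sub]
      rfl
  have hres : AnalyticAt ℂ (resolvent ι) s₀ :=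
    analyticAt_resolvent (mem_resolventSet_continuousMap (hι (mem_ball_self hR)))
  have hpair : AnalyticAt ℂ (fun p : ℂ × ℂ ↦ -resolvent ι p.2 • Φ p.1) (w₀, s₀) :=
    (hres.comp_of_eq analyticAt_snd rfl).neg.smul
      ((hΦ w₀ (mem_ball_self hR)).comp_of_eq (x := (w₀, s₀)) analyticAt_fst rfl)
  exact (analyticAt_const.smul
    (((circleIntegralCLM s₀ hR.le).analyticAt _).comp hpair)).congr hcauchy.symm

end Osgood

theorem analyticAt_tsum_of_eventually_norm_le {F : Type*} [NormedAddCommGroup F] [NormedSpace ℂ F]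
    [CompleteSpace F] {ι : Type*} {f : ι → ℂ × ℂ → F} {u : ι → ℝ} (hu : Summable u) {p₀ : ℂ × ℂ}
    (hf : ∀ᶠ p in 𝓝 p₀, ∀ i, DifferentiableAt ℂ (f i) p ∧ ‖f i p‖ ≤ u i) :
    AnalyticAt ℂ (fun p ↦ ∑' i, f i p) p₀ := by
  obtain ⟨U, hfU, hU, hp₀⟩ := _root_.eventually_nhds_iff.1 hf
  refine analyticOnNhd_of_continuousOn_of_differentiableAt_slices hU ?_ ?_ ?_ p₀ hp₀
  · exact continuousOn_tsum (fun i p hp ↦ (hfU p hp i).1.continuousAt.continuousWithinAt) hu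
      fun i p hp ↦ (hfU p hp i).2
  · rintro ⟨w, s⟩ hp
    have hV : IsOpen ((·, s) ⁻¹' U) := hU.preimage (by fun_prop)
    refine (differentiableOn_tsum_of_summable_norm hu (fun i v hv ↦ ?_) hV
      fun i v hv ↦ (hfU _ hv i).2).differentiableAt (hV.mem_nhds hp)
    exact ((hfU _ hv i).1.comp (f := (·, s)) v (by fun_prop)).differentiableWithinAt
  · rintro ⟨w, s⟩ hp
    have hV : IsOpen ((w, ·) ⁻¹' U) := hU.preimage (by fun_prop)
    refine (differentiableOn_tsum_of_summable_norm hu (fun i v hv ↦ ?_) hV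
      fun i v hv ↦ (hfU _ hv i).2).differentiableAt (hV.mem_nhds hp)
    exact ((hfU _ hv i).1.comp (f := (w, ·)) v (by fun_prop)).differentiableWithinAt

theorem exists_analyticOnNhd_iUnion {𝕜 E F : Type*} [NontriviallyNormedField 𝕜]
    [NormedAddCommGroup E] [NormedSpace 𝕜 E] [NormedAddCommGroup F] [NormedSpace 𝕜 F]
    {U : ℕ → Set E} {G : ℕ → E → F} (hopen : ∀ n, IsOpen (U n)) (hU : Monotone U)
    (hG : ∀ n, AnalyticOnNhd 𝕜 (G n) (U n)) (hsucc : ∀ n, EqOn (G (n + 1)) (G n) (U n)) :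
    ∃ g : E → F, AnalyticOnNhd 𝕜 g (⋃ n, U n) ∧ ∀ n, EqOn g (G n) (U n) := by
  classical
  have hglue (n) : EqOn (fun x ↦ G (sInf {n | x ∈ U n}) x) (G n) (U n) := fun x hx ↦ by
    have hmem : x ∈ U (sInf {n | x ∈ U n}) := Nat.sInf_mem (s := {n | x ∈ U n}) ⟨n, hx⟩
    have hconst : ∀ m ≥ sInf {n | x ∈ U n}, G m x = G (sInf {n | x ∈ U n}) x :=
      Nat.le_induction rfl fun m hm ih ↦ (hsucc m (hU hm hmem)).trans ih
    exact (hconst n (Nat.sInf_le hx)).symm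
  refine ⟨_, fun x hx ↦ ?_, hglue⟩
  obtain ⟨n, hn⟩ := mem_iUnion.1 hx
  exact (hG n x hn).congr ((hglue n).symm.eventuallyEq_of_mem ((hopen n).mem_nhds hn))

theorem tsum_pow_mul_eq_tsum_pow_mul_fwdDiff {𝕜 : Type*} [Field 𝕜] [TopologicalSpace 𝕜]
    [IsTopologicalRing 𝕜] [T2Space 𝕜] {q : 𝕜} (hq : q ≠ 1) {f : ℕ → 𝕜}
    (hf : Summable fun m ↦ q ^ m * f m) :
    ∑' m, q ^ m * f m = (1 - q)⁻¹ * (f 0 + q * ∑' m, q ^ m * fwdDiff 1 f m) := by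
  have htail : Summable fun m ↦ q ^ (m + 1) * f (m + 1) := (summable_nat_add_iff 1).2 hf
  have hdiff : q * ∑' m, q ^ m * fwdDiff 1 f m =
      ∑' m, q ^ (m + 1) * f (m + 1) - q * ∑' m, q ^ m * f m := by
    rw [← tsum_mul_left, ← tsum_mul_left, ← htail.tsum_sub (hf.mul_left q)]
    refine tsum_congr fun m ↦ ?_
    rw [fwdDiff]
    ring
  have hhead := hf.tsum_eq_zero_add
  rw [pow_zero, one_mul] at hhead
  rw [eq_inv_mul_iff_mul_eq₀ (sub_ne_zero.2 hq.symm), hdiff]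
  linear_combination hhead

section Cpow

theorem add_ofReal_mem_slitPlane {w : ℂ} (hw : w ∈ slitPlane) {t : ℝ} (ht : 0 ≤ t) :
    w + t ∈ slitPlane := by
  rw [mem_slitPlane_iff, add_re, add_im, ofReal_re, ofReal_im, add_zero] at *
  exact hw.imp_left (add_pos_of_pos_of_nonneg · ht)

theorem add_natCast_mem_slitPlane {w : ℂ} (hw : w ∈ slitPlane) (n : ℕ) : w + n ∈ slitPlane :=
  mod_cast add_ofReal_mem_slitPlane hw n.cast_nonneg

theorem div_natCast_mem_slitPlane {k : ℕ} (hk : 0 < k) {w : ℂ} :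
    w / k ∈ slitPlane ↔ w ∈ slitPlane := by
  simp only [mem_slitPlane_iff, div_natCast_re, div_natCast_im, ne_eq, div_eq_zero_iff,
    div_pos_iff_of_pos_right (Nat.cast_pos.2 hk), Nat.cast_eq_zero, hk.ne', or_false]

theorem mem_slitPlane_iff_not_exists_ofReal {w : ℂ} :
    w ∈ slitPlane ↔ ¬ ∃ x : ℝ, x ≤ 0 ∧ w = x := by
  rw [mem_slitPlane_iff_not_le_zero, not_iff_not, Complex.le_def]
  exact ⟨fun h ↦ ⟨w.re, h.1, Complex.ext rfl h.2⟩, by rintro ⟨x, hx, rfl⟩; simpa using hx⟩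

theorem ofReal_mul_cpow {r : ℝ} (hr : 0 < r) (z s : ℂ) :
    (r * z) ^ s = (r : ℂ) ^ s * z ^ s := by
  rcases eq_or_ne z 0 with rfl | hz
  · rcases eq_or_ne s 0 with rfl | hs <;> simp [*]
  · have hr₀ : (r : ℂ) ≠ 0 := ofReal_ne_zero.2 hr.ne'
    rw [cpow_def_of_ne_zero (mul_ne_zero hr₀ hz), cpow_def_of_ne_zero hr₀, cpow_def_of_ne_zero hz,
      log_ofReal_mul hr hz, ← ofReal_log hr.le, add_mul, Complex.exp_add]

/-- The `N`-th forward difference, with unit step, of `x ↦ x ^ (-s)` at `w`. -/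
noncomputable def cpowNegDiff (N : ℕ) (s w : ℂ) : ℂ :=
  (fwdDiff 1)^[N] (· ^ (-s)) w

theorem cpowNegDiff_zero (s w : ℂ) : cpowNegDiff 0 s w = w ^ (-s) := rfl

theorem cpowNegDiff_succ (N : ℕ) (s w : ℂ) :
    cpowNegDiff (N + 1) s w = cpowNegDiff N s (w + 1) - cpowNegDiff N s w := by
  rw [cpowNegDiff, Function.iterate_succ_apply', fwdDiff]
  rfl

theorem analyticAt_cpowNegDiff (N : ℕ) {E : Type*} [NormedAddCommGroup E] [NormedSpace ℂ E]
    {f g : E → ℂ} {x : E} (hf : AnalyticAt ℂ f x) (hg : AnalyticAt ℂ g x) (hgx : g x ∈ slitPlane) :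
    AnalyticAt ℂ (fun x ↦ cpowNegDiff N (f x) (g x)) x := by
  induction N generalizing g with
  | zero => exact hg.cpow hf.neg hgx
  | succ N ih =>
    simp only [cpowNegDiff_succ]
    exact (ih (hg.add analyticAt_const) (mod_cast add_natCast_mem_slitPlane hgx 1)).sub (ih hg hgx)

theorem hasDerivAt_cpowNegDiff (N : ℕ) (s : ℂ) {w : ℂ} (hw : w ∈ slitPlane) :
    HasDerivAt (cpowNegDiff N s) (-s * cpowNegDiff N (s + 1) w) w := by
  induction N generalizing w with
  | zero =>
    rw [cpowNegDiff_zero, neg_add', ← mul_one (-s * _)]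
    exact (hasDerivAt_id w).cpow_const hw
  | succ N ih =>
    rw [funext (cpowNegDiff_succ N s), cpowNegDiff_succ, mul_sub]
    exact ((ih (mod_cast add_natCast_mem_slitPlane hw 1)).comp_add_const w 1).sub (ih hw)

theorem norm_cpowNegDiff_le {N : ℕ} {w s : ℂ} {C : ℝ} (hw : w ∈ slitPlane)
    (hC : ∀ t ∈ Icc (0 : ℝ) N, ‖(w + t) ^ (-(s + N))‖ ≤ C) :
    ‖cpowNegDiff N s w‖ ≤ (∏ i ∈ Finset.range N, ‖s + i‖) * C := by
  induction N generalizing w s with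
  | zero => simpa [cpowNegDiff_zero] using hC 0 (by simp)
  | succ N ih =>
    have hderiv (t : ℝ) (ht : t ∈ Icc (0 : ℝ) 1) :
        ‖-s * cpowNegDiff N (s + 1) (w + t)‖ ≤ (∏ i ∈ Finset.range (N + 1), ‖s + i‖) * C := by
      have hih : ‖cpowNegDiff N (s + 1) (w + t)‖ ≤ (∏ i ∈ Finset.range N, ‖s + 1 + i‖) * C := by
        refine ih (add_ofReal_mem_slitPlane hw ht.1) fun u hu ↦ ?_
        have htu : t + u ∈ Icc (0 : ℝ) (N + 1 : ℕ) := by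
          push_cast
          constructor <;> linarith [ht.1, ht.2, hu.1, hu.2]
        convert hC (t + u) htu using 3 <;> push_cast <;> ring
      calc ‖-s * cpowNegDiff N (s + 1) (w + t)‖
        _ = ‖s‖ * ‖cpowNegDiff N (s + 1) (w + t)‖ := by rw [norm_mul, norm_neg]
        _ ≤ ‖s‖ * ((∏ i ∈ Finset.range N, ‖s + 1 + i‖) * C) := by gcongr
        _ = (∏ i ∈ Finset.range (N + 1), ‖s + i‖) * C := by
          simp only [Finset.prod_range_succ', Nat.cast_succ, Nat.cast_zero, add_zero, add_assoc,
            add_comm (1 : ℂ)]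
          ring
    have hsegment := norm_image_sub_le_of_norm_deriv_le_segment_01'
      (f := fun t : ℝ ↦ cpowNegDiff N s (w + t))
      (fun t ht ↦ ((hasDerivAt_cpowNegDiff N s
        (add_ofReal_mem_slitPlane hw ht.1)).comp_const_add w t).comp_ofReal.hasDerivWithinAt)
      fun t ht ↦ hderiv t ⟨ht.1, ht.2.le⟩
    simpa only [cpowNegDiff_succ, ofReal_one, ofReal_zero, add_zero] using hsegment

theorem eventually_norm_cpow_neg_le {w₀ s₀ : ℂ} (hw₀ : w₀ ∈ slitPlane) {σ : ℝ} (hσ : σ < s₀.re) :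
    ∃ C, ∀ᶠ p : ℂ × ℂ in 𝓝 (w₀, s₀), ∀ x : ℝ, 0 ≤ x →
      ‖(p.1 + x) ^ (-p.2)‖ ≤ C * (1 + x) ^ (-σ) := by
  obtain ⟨K, hK, hw₀K, hKsub⟩ := exists_compact_subset
    ((isOpen_slitPlane.preimage continuous_fst).inter
      (isOpen_lt continuous_const (continuous_re.comp continuous_snd)))
    (show (w₀, s₀) ∈ {p : ℂ × ℂ | p.1 ∈ slitPlane} ∩ {p | σ < p.2.re} from ⟨hw₀, hσ⟩)
  have hmem {w : ℂ} (hw : w ∈ slitPlane) {τ : ℝ} (hτ : τ ∈ Icc (0 : ℝ) 1) :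
      (1 : ℂ) + τ • (w - 1) ∈ slitPlane :=
    starConvex_one_slitPlane.add_smul_sub_mem hw hτ.1 hτ.2
  obtain ⟨C, hC⟩ := (hK.prod (isCompact_Icc (a := (0 : ℝ)) (b := 1))).exists_bound_of_continuousOn
    (f := fun y ↦ (1 + y.2 • (y.1.1 - 1)) ^ (-y.1.2))
    (ContinuousOn.cpow (by fun_prop) (by fun_prop) fun y hy ↦ hmem (hKsub hy.1).1 hy.2)
  refine ⟨C, mem_of_superset (mem_interior_iff_mem_nhds.1 hw₀K) fun p hp x hx ↦ ?_⟩
  have hx₁ : 0 < 1 + x := by positivity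
  -- `1 + (p.1 - 1) / (1 + x)` stays on the segment from `1` to `p.1`, where powers are bounded.
  have hscale : p.1 + x = (1 + x : ℝ) * (1 + (1 + x)⁻¹ • (p.1 - 1)) := by
    rw [real_smul, mul_add, ofReal_inv, mul_inv_cancel_left₀ (ofReal_ne_zero.2 hx₁.ne')]
    push_cast
    ring
  rw [hscale, ofReal_mul_cpow hx₁, norm_mul, mul_comm, norm_cpow_eq_rpow_re_of_pos hx₁]
  have hbound := hC (p, (1 + x)⁻¹) ⟨hp, by positivity, inv_le_one_of_one_le₀ (by linarith)⟩
  refine mul_le_mul hbound (Real.rpow_le_rpow_of_exponent_le (by linarith) ?_) (by positivity)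
    ((norm_nonneg _).trans hbound)
  rw [neg_re]
  exact neg_le_neg (hKsub hp).2.le

theorem exists_summable_norm_cpowNegDiff_le {N : ℕ} {w₀ s₀ : ℂ} (hw₀ : w₀ ∈ slitPlane)
    (hs₀ : 1 - N < s₀.re) :
    ∃ u : ℕ → ℝ, Summable u ∧ ∀ᶠ p : ℂ × ℂ in 𝓝 (w₀, s₀), ∀ m : ℕ,
      ‖cpowNegDiff N p.2 (p.1 + m)‖ ≤ u m := by
  have hre : 1 < (s₀ + N).re := by simpa [sub_lt_iff_lt_add] using hs₀
  obtain ⟨σ, hσ, hσs⟩ := exists_between hre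
  obtain ⟨C, hC⟩ := eventually_norm_cpow_neg_le hw₀ hσs
  have hshift : Tendsto (fun p : ℂ × ℂ ↦ (p.1, p.2 + N)) (𝓝 (w₀, s₀)) (𝓝 (w₀, s₀ + N)) :=
    Continuous.tendsto (by fun_prop) (w₀, s₀)
  have hprod : ∀ᶠ p : ℂ × ℂ in 𝓝 (w₀, s₀),
      ∏ i ∈ Finset.range N, ‖p.2 + i‖ < ∏ i ∈ Finset.range N, ‖s₀ + i‖ + 1 :=
    (Continuous.tendsto (by fun_prop) (w₀, s₀)).eventually_lt_const (lt_add_one _)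
  have hslit : ∀ᶠ p : ℂ × ℂ in 𝓝 (w₀, s₀), p.1 ∈ slitPlane :=
    continuousAt_fst.eventually_mem (isOpen_slitPlane.mem_nhds hw₀)
  refine ⟨fun m ↦ (∏ i ∈ Finset.range N, ‖s₀ + i‖ + 1) * (C * (1 + m) ^ (-σ)),
    .mul_left _ (.mul_left _ ?_), ?_⟩
  · simpa only [Nat.cast_add, Nat.cast_one, add_comm (1 : ℝ)] using
      (summable_nat_add_iff 1).2 (Real.summable_nat_rpow.2 (neg_lt_neg hσ))
  filter_upwards [hshift.eventually hC, hprod, hslit] with p hCp hprodp hwp m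
  have hC₀ : 0 ≤ C := by simpa using (norm_nonneg _).trans (hCp 0 le_rfl)
  refine (norm_cpowNegDiff_le (add_natCast_mem_slitPlane hwp m) (C := C * (1 + m) ^ (-σ))
    fun t ht ↦ ?_).trans (by gcongr)
  have hbound := hCp (m + t) (by have := ht.1; positivity)
  push_cast at hbound
  rw [add_assoc]
  refine hbound.trans ?_
  gcongr ?_ * ?_
  exact Real.rpow_le_rpow_of_nonpos (by positivity) (by linarith [ht.1]) (by linarith)

end Cpow

section LerchContinuation

/-- The open set on which the `N`-th Euler transform of the Lerch series converges. -/
def lerchDomain (N : ℕ) : Set (ℂ × ℂ) :=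
  {p | p.1 ∈ slitPlane ∧ 1 - N < p.2.re}

theorem isOpen_lerchDomain (N : ℕ) : IsOpen (lerchDomain N) :=
  (isOpen_slitPlane.preimage continuous_fst).inter
    (isOpen_lt continuous_const (continuous_re.comp continuous_snd))

theorem monotone_lerchDomain : Monotone lerchDomain := fun _ _ h _ hp ↦
  ⟨hp.1, (sub_le_sub_left (Nat.cast_le.2 h) 1).trans_lt hp.2⟩

theorem iUnion_lerchDomain : ⋃ N, lerchDomain N = slitPlane ×ˢ univ := by
  ext p
  have := exists_nat_gt (1 - p.2.re)
  simp only [lerchDomain, mem_iUnion, mem_ofPred_eq, exists_and_left, mem_prod, mem_univ,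
    sub_lt_comm, this]

/-- The tail of the `N`-th Euler transform of the Lerch series: the power series in `q` whose
coefficients are the `N`-th forward differences of `x ↦ x ^ (-s)` along `w + ℕ`, where
`p = (w, s)`. -/
noncomputable def lerchTail (q : ℂ) (N : ℕ) (p : ℂ × ℂ) : ℂ :=
  ∑' m : ℕ, q ^ m * cpowNegDiff N p.2 (p.1 + m)

/-- The `N`-th Euler transform of the Lerch series `∑' m, q ^ m * (w + m) ^ (-s)`, obtained from it
by `N` summations by parts; here `p = (w, s)`. -/
noncomputable def lerchEuler (q : ℂ) (N : ℕ) (p : ℂ × ℂ) : ℂ :=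
  ∑ i ∈ Finset.range N, (q / (1 - q)) ^ i * (1 - q)⁻¹ * cpowNegDiff i p.2 p.1 +
    (q / (1 - q)) ^ N * lerchTail q N p

variable {q : ℂ} {N : ℕ} {p : ℂ × ℂ}

theorem exists_summable_norm_pow_mul_cpowNegDiff_le (hq : ‖q‖ ≤ 1) (hp : p ∈ lerchDomain N) :
    ∃ u : ℕ → ℝ, Summable u ∧ ∀ᶠ p in 𝓝 p, ∀ m : ℕ,
      ‖q ^ m * cpowNegDiff N p.2 (p.1 + m)‖ ≤ u m := by
  obtain ⟨u, hu, hbound⟩ := exists_summable_norm_cpowNegDiff_le hp.1 hp.2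
  refine ⟨u, hu, hbound.mono fun p hp m ↦ ?_⟩
  rw [norm_mul, norm_pow]
  exact (mul_le_of_le_one_left (norm_nonneg _) (pow_le_one₀ (norm_nonneg q) hq)).trans (hp m)

theorem summable_lerchTail (hq : ‖q‖ ≤ 1) (hp : p ∈ lerchDomain N) :
    Summable fun m : ℕ ↦ q ^ m * cpowNegDiff N p.2 (p.1 + m) :=
  let ⟨_, hu, hbound⟩ := exists_summable_norm_pow_mul_cpowNegDiff_le hq hp
  .of_norm_bounded hu hbound.self_of_nhds

theorem analyticOnNhd_lerchTail (hq : ‖q‖ ≤ 1) (N : ℕ) :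
    AnalyticOnNhd ℂ (lerchTail q N) (lerchDomain N) := by
  intro p hp
  obtain ⟨u, hu, hbound⟩ := exists_summable_norm_pow_mul_cpowNegDiff_le hq hp
  refine analyticAt_tsum_of_eventually_norm_le hu ?_
  filter_upwards [hbound, (isOpen_lerchDomain N).mem_nhds hp] with p hp' hp m
  have hterm : AnalyticAt ℂ (fun p : ℂ × ℂ ↦ cpowNegDiff N p.2 (p.1 + m)) p :=
    analyticAt_cpowNegDiff N analyticAt_snd (analyticAt_fst.add analyticAt_const)
      (add_natCast_mem_slitPlane hp.1 m)
  exact ⟨(analyticAt_const.mul hterm).differentiableAt, hp' m⟩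

theorem analyticOnNhd_lerchEuler (hq : ‖q‖ ≤ 1) (N : ℕ) :
    AnalyticOnNhd ℂ (lerchEuler q N) (lerchDomain N) := fun p hp ↦
  (Finset.analyticAt_fun_sum _ fun i _ ↦ analyticAt_const.mul
    (analyticAt_cpowNegDiff i analyticAt_snd analyticAt_fst hp.1)).add
    (analyticAt_const.mul (analyticOnNhd_lerchTail hq N p hp))

theorem lerchTail_eq_lerchTail_succ (hq : ‖q‖ ≤ 1) (hq₁ : q ≠ 1) (hp : p ∈ lerchDomain N) :
    lerchTail q N p =
      (1 - q)⁻¹ * (cpowNegDiff N p.2 p.1 + q * lerchTail q (N + 1) p) := by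
  rw [lerchTail, tsum_pow_mul_eq_tsum_pow_mul_fwdDiff hq₁ (summable_lerchTail hq hp)]
  simp only [lerchTail, cpowNegDiff_succ, fwdDiff, Nat.cast_zero, add_zero,
    Nat.cast_succ, add_assoc]

theorem lerchEuler_succ (hq : ‖q‖ ≤ 1) (hq₁ : q ≠ 1) (hp : p ∈ lerchDomain N) :
    lerchEuler q (N + 1) p = lerchEuler q N p := by
  rw [lerchEuler, lerchEuler, lerchTail_eq_lerchTail_succ hq hq₁ hp, Finset.sum_range_succ]
  ring

theorem exists_analyticOnNhd_hasSum_lerch (hq : ‖q‖ ≤ 1) (hq₁ : q ≠ 1) :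
    ∃ L : ℂ × ℂ → ℂ, AnalyticOnNhd ℂ L (slitPlane ×ˢ univ) ∧
      ∀ w ∈ slitPlane, ∀ s : ℂ, 1 < s.re →
        HasSum (fun m : ℕ ↦ q ^ m * (w + m) ^ (-s)) (L (w, s)) := by
  obtain ⟨L, hL, hLeq⟩ := exists_analyticOnNhd_iUnion isOpen_lerchDomain monotone_lerchDomain
    (analyticOnNhd_lerchEuler hq) fun N p ↦ lerchEuler_succ hq hq₁
  rw [iUnion_lerchDomain] at hL
  refine ⟨L, hL, fun w hw s hs ↦ ?_⟩
  have hp : (w, s) ∈ lerchDomain 0 := ⟨hw, by simpa using hs⟩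
  have hL₀ : L (w, s) = lerchTail q 0 (w, s) := by simp [hLeq 0 hp, lerchEuler]
  exact hL₀ ▸ (summable_lerchTail hq hp).hasSum

end LerchContinuation

section ResidueClasses

theorem hasSum_of_hasSum_residueClasses {M : Type*} [AddCommMonoid M] [TopologicalSpace M]
    [ContinuousAdd M] {k : ℕ} (hk : 0 < k) {f : ℕ → M} {S : Fin k → M}
    (hf : ∀ j : Fin k, HasSum (fun m ↦ f (m * k + j)) (S j)) : HasSum f (∑ j, S j) := by
  have hclass (j : Fin k) : HasSum (fun n ↦ if n % k = j then f n else 0) (S j) := by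
    have hinj : Function.Injective fun m ↦ m * k + (j : ℕ) :=
      (add_left_injective _).comp (mul_left_injective₀ hk.ne')
    refine (hinj.hasSum_iff fun n hn ↦ if_neg fun hnj ↦ hn ⟨n / k, ?_⟩).1 ?_
    · simp only [← hnj, Nat.div_add_mod']
    · simpa [Function.comp_def, Nat.mul_add_mod', Nat.mod_eq_of_lt j.2] using hf j
  have hsplit (n : ℕ) : ∑ j : Fin k, (if n % k = j then f n else 0) = f n := by
    rw [Finset.sum_eq_single ⟨n % k, n.mod_lt hk⟩ (fun j _ hj ↦ if_neg fun h ↦ hj (Fin.ext h.symm))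
      (by simp), if_pos rfl]
  simpa only [hsplit] using hasSum_sum (s := Finset.univ) fun j _ ↦ hclass j

theorem norm_exp_two_pi_I_mul_le_one_s15 {a : ℂ} (ha : 0 ≤ a.im) : ‖cexp (2 * π * I * a)‖ ≤ 1 := by
  have hre : (2 * π * I * a).re = -(2 * π * a.im) := by simp
  rw [Complex.norm_exp, Real.exp_le_one_iff, hre, neg_nonpos]
  positivity

theorem exp_two_pi_I_mul_eq_one_iff_s15 {a : ℂ} : cexp (2 * π * I * a) = 1 ↔ ∃ m : ℤ, a = m := by
  simp only [Complex.exp_eq_one_iff, mul_comm (2 * π * I : ℂ), mul_left_inj' two_pi_I_ne_zero]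

theorem exp_mul_cpow_residueClass {k : ℕ} (hk : 0 < k) (a z s : ℂ) (j m : ℕ) :
    cexp (2 * π * I * ((m * k + j : ℕ) + 1) * a) * ((m * k + j : ℕ) + 1 + z) ^ (-s) =
      cexp (2 * π * I * (j + 1) * a) * (k : ℂ) ^ (-s) *
        (cexp (2 * π * I * (k * a)) ^ m * ((j + 1 + z) / k + m) ^ (-s)) := by
  have hk₀ : (k : ℂ) ≠ 0 := Nat.cast_ne_zero.2 hk.ne'
  have hbase : ((m * k + j : ℕ) + 1 + z : ℂ) = (k : ℝ) * ((j + 1 + z) / k + m) := by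
    push_cast
    field_simp
    ring
  have hexp : cexp (2 * π * I * ((m * k + j : ℕ) + 1) * a) =
      cexp (2 * π * I * (j + 1) * a) * cexp (2 * π * I * (k * a)) ^ m := by
    rw [← Complex.exp_nat_mul, ← Complex.exp_add]
    push_cast
    ring_nf
  rw [hbase, ofReal_mul_cpow (Nat.cast_pos.2 hk), hexp, ofReal_natCast]
  ring

end ResidueClasses

/-- If no `a j` lies in `ℤ[1/k]`, the `k`-periodic Lerch–Lipschitz zeta function
extends to a function `F(z, s)` of the vectorial variable `z` and `s` that is analytic
on `Ω × ℂ`, where `Ω` is the set of `z` such that every base `(j+1) + z j` avoids the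
closed negative real axis. -/
theorem zeta_k_analytic_in_z_and_s_entire
    (k : ℕ) (hk : 0 < k)
    (a : Fin k → ℂ) (haIm : ∀ j, 0 ≤ (a j).im)
    (haZ : ∀ j : Fin k, ¬ ∃ m : ℤ, (k : ℂ) * a j = (m : ℂ)) :
    IsOpen {z : Fin k → ℂ | ∀ j : Fin k,
        ¬ ∃ x : ℝ, x ≤ 0 ∧ ((j : ℂ) + 1) + z j = (x : ℂ)} ∧
    ∃ F : (Fin k → ℂ) × ℂ → ℂ,
      AnalyticOnNhd ℂ F
        ({z : Fin k → ℂ | ∀ j : Fin k,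
            ¬ ∃ x : ℝ, x ≤ 0 ∧ ((j : ℂ) + 1) + z j = (x : ℂ)} ×ˢ Set.univ) ∧
      ∀ z : Fin k → ℂ,
        (∀ j : Fin k, ¬ ∃ x : ℝ, x ≤ 0 ∧ ((j : ℂ) + 1) + z j = (x : ℂ)) →
        ∀ s : ℂ, 1 < s.re →
          F (z, s) = ∑' n : ℕ,
            Complex.exp (2 * Real.pi * Complex.I * ((n : ℂ) + 1) *
                a ⟨n % k, Nat.mod_lt n hk⟩) *
              (((n : ℂ) + 1) + z ⟨n % k, Nat.mod_lt n hk⟩) ^ (-s) := by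
  simp only [← mem_slitPlane_iff_not_exists_ofReal]
  refine ⟨?_, ?_⟩
  · rw [ofPred_forall]
    exact isOpen_iInter_of_finite fun j ↦ isOpen_slitPlane.preimage (by fun_prop)
  choose L hL hLsum using fun j ↦ exists_analyticOnNhd_hasSum_lerch
    (norm_exp_two_pi_I_mul_le_one_s15 (a := k * a j) (by simpa using mul_nonneg k.cast_nonneg (haIm j)))
    (exp_two_pi_I_mul_eq_one_iff_s15.not.2 (haZ j))
  refine ⟨fun p ↦ ∑ j : Fin k, cexp (2 * π * I * (j + 1) * a j) * (k : ℂ) ^ (-p.2) *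
    L j ((j + 1 + p.1 j) / k, p.2), fun p hp ↦ ?_, fun z hz s hs ↦ (HasSum.tsum_eq ?_).symm⟩
  · refine Finset.analyticAt_fun_sum _ fun j _ ↦ ?_
    have hz : AnalyticAt ℂ (fun p : (Fin k → ℂ) × ℂ ↦ p.1 j) p :=
      ((ContinuousLinearMap.proj j).comp (ContinuousLinearMap.fst ℂ (Fin k → ℂ) ℂ)).analyticAt p
    have hkcpow : AnalyticAt ℂ (fun p : (Fin k → ℂ) × ℂ ↦ (k : ℂ) ^ (-p.2)) p :=
      analyticAt_const.cpow analyticAt_snd.neg (natCast_mem_slitPlane.2 hk.ne')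
    exact (analyticAt_const.mul hkcpow).mul
      ((hL j _ ⟨(div_natCast_mem_slitPlane hk).2 (hp.1 j), mem_univ _⟩).fun_comp
        (((analyticAt_const.add hz).div_const).prod analyticAt_snd))
  · refine hasSum_of_hasSum_residueClasses hk fun j ↦ ?_
    have hmod (m : ℕ) : (⟨(m * k + j) % k, Nat.mod_lt _ hk⟩ : Fin k) = j := by
      simp [Nat.mod_eq_of_lt j.2]
    simp only [hmod, exp_mul_cpow_residueClass hk]
    exact (hLsum j _ ((div_natCast_mem_slitPlane hk).2 (hz j)) s hs).mul_left _
end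

section
/- Hartogs-type extension over the real slice in finite dimensions: fix k ≥ 1, a point x0 ∈ Fin k → ℂ with all coordinates real, and β > 0; let B be the open ball of radius β centered at x0 in Fin k → ℂ, and let 𝔻 be the open unit disk in ℂ. Let f : (Fin k → ℂ) × ℂ → ℂ be analytic on B × 𝔻, and suppose that for every x ∈ B all of whose coordinates are real there exists an entire function g_x : ℂ → ℂ with g_x(s) = f(x, s) for every s ∈ 𝔻. Then there exists F : (Fin k → ℂ) × ℂ → ℂ analytic on B × ℂ with F(z, s) = f(z, s) for every (z, s) ∈ B × 𝔻. -/
/-!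
Expand `f (z, s) = ∑ a n z * s ^ n`. Cauchy's estimates bound `a n` geometrically, locally
uniformly in `z`, and a slice `f (x, ·)` extends to an entire function exactly when `a n x` decays
faster than every geometric sequence. The functions `n⁻¹ * log⁺ ‖R ^ n * a n‖` are nonnegative,
subharmonic and locally uniformly bounded, and they tend to `0` at a point of decay. On an
analytic disc whose boundary meets the set of decay in an arc, decay therefore holds at the
center, by comparison with harmonic measure. Discs with an arc in the real points carry the decay
to a neighborhood of `x0`, and affine discs carry it to everything connected to `x0`. Finally, by
the sub-mean value property over balls and dominated convergence (Hartogs' lemma), the decay is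
locally uniform, so the power series in `s` converges to an analytic function for all `s`.
-/

open Filter Function MeasureTheory Metric Real Set Topology
open scoped Nat NNReal

section PowerSeries

variable {E F : Type*} [NormedAddCommGroup E] [NormedSpace ℂ E]
  [NormedAddCommGroup F] [NormedSpace ℂ F]

theorem norm_fderiv_le_of_forall_mem_ball_norm_le {g : E → F} {x : E} {δ C : ℝ} (hδ : 0 < δ)
    (hg : DifferentiableOn ℂ g (ball x δ)) (hC : ∀ y ∈ ball x δ, ‖g y‖ ≤ C) :
    ‖fderiv ℂ g x‖ ≤ 2 * C / δ := by
  refine Complex.norm_fderiv_le_div_of_mapsTo_ball hg (fun y hy => ?_) hδ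
  rw [mem_closedBall, dist_eq_norm, two_mul]
  exact (norm_sub_le _ _).trans (add_le_add (hC y hy) (hC x (mem_ball_self hδ)))

variable [CompleteSpace F]

theorem norm_iteratedFDeriv_le_of_forall_mem_ball_norm_le {g : E → F} {p : E} {r C δ : ℝ}
    (hg : AnalyticOnNhd ℂ g (ball p r)) (hC : ∀ x ∈ ball p r, ‖g x‖ ≤ C) (hδ : 0 < δ) (m : ℕ) :
    ∀ x ∈ ball p (r - m * δ), ‖iteratedFDeriv ℂ m g x‖ ≤ C * (2 / δ) ^ m := by
  induction m with
  | zero => intro x hx; simpa using hC x (by simpa using hx)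
  | succ m ih =>
    intro x hx
    have hsub : ball x δ ⊆ ball p (r - m * δ) := ball_subset_ball' <| by
      have hx' : dist x p < r - (m + 1) * δ := by exact_mod_cast hx
      linarith
    have hsub' : ball p (r - m * δ) ⊆ ball p r :=
      ball_subset_ball (sub_le_self r (by positivity))
    have hdiff : DifferentiableOn ℂ (iteratedFDeriv ℂ m g) (ball x δ) := fun y hy =>
      (hg.iteratedFDeriv m y (hsub' (hsub hy))).differentiableAt.differentiableWithinAt
    rw [← norm_fderiv_iteratedFDeriv]
    calc ‖fderiv ℂ (iteratedFDeriv ℂ m g) x‖ ≤ 2 * (C * (2 / δ) ^ m) / δ :=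
          norm_fderiv_le_of_forall_mem_ball_norm_le hδ hdiff fun y hy => ih y (hsub hy)
      _ = C * (2 / δ) ^ (m + 1) := by ring

theorem iteratedDeriv_line_eq_iteratedFDeriv {g : E → F} {U : Set E} (hU : IsOpen U)
    (hg : AnalyticOnNhd ℂ g U) {p : E} (hp : p ∈ U) (y : E) (m : ℕ) :
    iteratedDeriv m (fun t : ℂ => g (p + t • y)) 0 = iteratedFDeriv ℂ m g p fun _ => y := by
  let L : ℂ →L[ℂ] E := ContinuousLinearMap.toSpanSingleton ℂ y
  let V : Set E := (p + ·) ⁻¹' U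
  have hV : IsOpen V := hU.preimage (continuous_const_add p)
  have hL : IsOpen (L ⁻¹' V) := hV.preimage L.continuous
  have h0 : L 0 ∈ V := by simpa [V] using hp
  have hcont : ContDiffOn ℂ m (fun x => g (p + x)) V := fun x hx =>
    ((hg _ hx).contDiffAt.comp x (by fun_prop)).contDiffWithinAt
  have key := L.iteratedFDerivWithin_comp_right hcont hV.uniqueDiffOn hL.uniqueDiffOn h0 le_rfl
  rw [iteratedFDerivWithin_of_isOpen m hL h0, iteratedFDerivWithin_of_isOpen m hV h0,
    iteratedFDeriv_comp_add_left] at key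
  simpa [L, iteratedDeriv_eq_iteratedFDeriv, comp_def] using congr($key fun _ => 1)

/-- The Taylor series of `g` at `p`, as a formal multilinear series: unlike `ftaylorSeries`, its
terms carry the factor `1 / m!`. -/
noncomputable def taylorFormalSeries (g : E → F) (p : E) : FormalMultilinearSeries ℂ E F :=
  fun m => (m ! : ℂ)⁻¹ • iteratedFDeriv ℂ m g p

theorem norm_taylorFormalSeries_le {g : E → F} {p : E} {r C : ℝ} (hr : 0 < r)
    (hg : AnalyticOnNhd ℂ g (ball p r)) (hC : ∀ x ∈ ball p r, ‖g x‖ ≤ C) (m : ℕ) :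
    ‖taylorFormalSeries g p m‖ ≤ C * exp 1 * (2 * exp 1 / r) ^ m := by
  have hC0 : 0 ≤ C := (norm_nonneg _).trans (hC p (mem_ball_self hr))
  -- The radius `r` is split into `m + 1` equal steps, one to spare.
  have hderiv := norm_iteratedFDeriv_le_of_forall_mem_ball_norm_le hg hC (δ := r / (m + 1))
    (by positivity) m p <| mem_ball_self <| by
      rw [sub_pos, mul_div_assoc', div_lt_iff₀ (by positivity)]
      linarith
  have hfact : (m + 1 : ℝ) ^ m / m ! ≤ exp 1 * exp 1 ^ m :=
    calc (m + 1 : ℝ) ^ m / m ! ≤ exp (m + 1) := pow_div_factorial_le_exp _ (by positivity) m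
      _ = exp 1 * exp 1 ^ m := by rw [add_comm, exp_add, exp_one_pow]
  calc ‖taylorFormalSeries g p m‖ = (m ! : ℝ)⁻¹ * ‖iteratedFDeriv ℂ m g p‖ := by
        rw [taylorFormalSeries, norm_smul, norm_inv, Complex.norm_natCast]
    _ ≤ (m ! : ℝ)⁻¹ * (C * (2 / (r / (m + 1))) ^ m) := by gcongr
    _ = C * (2 / r) ^ m * ((m + 1 : ℝ) ^ m / m !) := by
        rw [div_div_eq_mul_div, mul_div_right_comm, mul_pow]; ring
    _ ≤ C * (2 / r) ^ m * (exp 1 * exp 1 ^ m) := by gcongr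
    _ = C * exp 1 * (2 * exp 1 / r) ^ m := by ring

theorem hasSum_taylorFormalSeries {g : E → F} {p y : E} {r : ℝ}
    (hg : AnalyticOnNhd ℂ g (ball p r)) (hy : ‖y‖ < r) :
    HasSum (fun m => taylorFormalSeries g p m fun _ => y) (g (p + y)) := by
  have hr : 0 < r := (norm_nonneg y).trans_lt hy
  obtain ⟨R, hR1, hR⟩ : ∃ R : ℝ, 1 < R ∧ R * ‖y‖ < r := by
    have hev : ∀ᶠ R in 𝓝 (1 : ℝ), R * ‖y‖ < r :=
      (continuous_mul_const ‖y‖).continuousAt.eventually_lt_const (by simpa using hy)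
    exact ((eventually_mem_nhdsWithin (s := Ioi 1)).and (hev.filter_mono nhdsWithin_le_nhds)).exists
  have hline : DifferentiableOn ℂ (fun t : ℂ => g (p + t • y)) (ball 0 R) := fun t ht => by
    have hmem : p + t • y ∈ ball p r := by
      rw [mem_ball_iff_norm, add_sub_cancel_left, norm_smul]
      exact (mul_le_mul_of_nonneg_right (mem_ball_zero_iff.1 ht).le (norm_nonneg _)).trans_lt hR
    exact ((hg _ hmem).differentiableAt.comp t (by fun_prop)).differentiableWithinAt
  simpa [taylorFormalSeries,
    iteratedDeriv_line_eq_iteratedFDeriv isOpen_ball hg (mem_ball_self hr)] using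
    Complex.hasSum_taylorSeries_on_ball hline (z := 1) (by simpa using hR1)

theorem norm_taylorFormalSeries_mul_pow_le {g : E → F} {p : E} {r C : ℝ} (hr : 0 < r)
    (hg : AnalyticOnNhd ℂ g (ball p r)) (hC : ∀ x ∈ ball p r, ‖g x‖ ≤ C) (m : ℕ) :
    ‖taylorFormalSeries g p m‖ * (r / (2 * exp 1)) ^ m ≤ C * exp 1 :=
  calc ‖taylorFormalSeries g p m‖ * (r / (2 * exp 1)) ^ m
      ≤ C * exp 1 * (2 * exp 1 / r) ^ m * (r / (2 * exp 1)) ^ m := by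
        gcongr; exact norm_taylorFormalSeries_le hr hg hC m
    _ = C * exp 1 := by
        rw [mul_assoc, ← mul_pow, div_mul_div_cancel₀ hr.ne', div_self (by positivity), one_pow,
          mul_one]

end PowerSeries

section WeierstrassTest

variable {𝕜 E F : Type*} [NontriviallyNormedField 𝕜] [NormedAddCommGroup E] [NormedSpace 𝕜 E]
  [NormedAddCommGroup F] [NormedSpace 𝕜 F] [CompleteSpace F]

theorem hasFPowerSeriesOnBall_tsum {ι : Type*} {A : ι → E → F}
    {q : ι → FormalMultilinearSeries 𝕜 E F} {p : E} {ρ : ℝ≥0} {u : ι → ℝ} (hρ : 0 < ρ)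
    (hu : Summable u) (hqu : ∀ i m, ‖q i m‖ * ρ ^ m ≤ u i)
    (hA : ∀ i, ∀ y ∈ ball (0 : E) ρ, HasSum (fun m => q i m fun _ => y) (A i (p + y))) :
    HasFPowerSeriesOnBall (fun x => ∑' i, A i x) (fun m => ∑' i, q i m) p ρ := by
  have hρ' : (0 : ℝ) < ρ := hρ
  have hq_le : ∀ m i, ‖q i m‖ ≤ u i / ρ ^ m := fun m i =>
    (le_div_iff₀ (by positivity)).2 (hqu i m)
  have hq : ∀ m, Summable fun i => ‖q i m‖ := fun m =>
    .of_nonneg_of_le (fun _ => norm_nonneg _) (hq_le m) (hu.div_const _)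
  refine ⟨FormalMultilinearSeries.le_radius_of_bound _ (∑' i, u i) fun m => ?_,
    by exact_mod_cast hρ, fun {y} hy => ?_⟩
  · rw [← le_div_iff₀ (by positivity), ← tsum_div_const]
    exact (norm_tsum_le_tsum_norm (hq m)).trans ((hq m).tsum_le_tsum (hq_le m) (hu.div_const _))
  · have hy' : y ∈ ball (0 : E) ρ := by rwa [← Metric.eball_coe]
    have hratio : ‖y‖ / ρ < 1 := (div_lt_one hρ').2 (mem_ball_zero_iff.1 hy')
    have hdouble : Summable (uncurry fun i m => q i m fun _ => y) := by
      refine Summable.of_norm_bounded (hu.mul_of_nonneg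
        (summable_geometric_of_lt_one (by positivity) hratio)
        (fun i => (norm_nonneg (q i 0)).trans (by simpa using hqu i 0))
        fun m => by positivity) fun ⟨i, m⟩ => ?_
      calc ‖q i m fun _ => y‖ ≤ ‖q i m‖ * ‖y‖ ^ m := by simpa using (q i m).le_opNorm fun _ => y
        _ ≤ u i / ρ ^ m * ‖y‖ ^ m := by gcongr; exact hq_le m i
        _ = u i * (‖y‖ / ρ) ^ m := by ring
    have hcol : ∀ m, ∑' i, q i m (fun _ => y) = (∑' i, q i m) fun _ => y := fun m =>
      ((ContinuousMultilinearMap.apply 𝕜 (fun _ : Fin m => E) F fun _ => y).map_tsum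
        (hq m).of_norm).symm
    have hsum : ∑' i, A i (p + y) = ∑' m, (∑' i, q i m) fun _ => y := by
      simp only [← hcol, ← (hA _ y hy').tsum_eq]
      exact hdouble.tsum_comm.symm
    rw [hsum]
    simpa only [Prod.swap_prod_mk, uncurry_apply_pair, hcol] using hdouble.prod_symm.prod.hasSum

end WeierstrassTest

theorem analyticAt_tsum_of_forall_mem_ball_norm_le {ι E F : Type*} [NormedAddCommGroup E]
    [NormedSpace ℂ E] [NormedAddCommGroup F] [NormedSpace ℂ F] [CompleteSpace F]
    {A : ι → E → F} {p : E} {r : ℝ} {u : ι → ℝ} (hr : 0 < r) (hu : Summable u)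
    (hA : ∀ i, AnalyticOnNhd ℂ (A i) (ball p r)) (hAu : ∀ i, ∀ x ∈ ball p r, ‖A i x‖ ≤ u i) :
    AnalyticAt ℂ (fun x => ∑' i, A i x) p := by
  let ρ : ℝ≥0 := ⟨r / (2 * exp 1), by positivity⟩
  have hρ : 0 < ρ := show 0 < r / (2 * exp 1) by positivity
  have hρr : (ρ : ℝ) ≤ r := div_le_self hr.le (by linarith [add_one_le_exp 1])
  exact (hasFPowerSeriesOnBall_tsum hρ (hu.mul_right (exp 1))
    (fun i m => norm_taylorFormalSeries_mul_pow_le hr (hA i) (hAu i) m)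
    fun i y hy => hasSum_taylorFormalSeries (hA i)
      ((mem_ball_zero_iff.1 hy).trans_le hρr)).analyticAt

section LogarithmicMeans

theorem posLog_norm_le_circleAverage {h : ℂ → ℂ} {c : ℂ} {r : ℝ} (hr : 0 < r)
    (hh : AnalyticOnNhd ℂ h (closedBall c r)) :
    log⁺ ‖h c‖ ≤ circleAverage (fun z => log⁺ ‖h z‖) c r := by
  have hnonneg : 0 ≤ circleAverage (fun z => log⁺ ‖h z‖) c r :=
    circleAverage_nonneg_of_nonneg fun _ _ => posLog_nonneg
  rw [posLog_apply]
  refine max_le hnonneg ?_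
  by_cases h0 : h c = 0
  · simpa [h0] using hnonneg
  rw [← abs_of_pos hr] at hh
  have hzeros : 0 ≤ ∑ᶠ u, MeromorphicOn.divisor h (closedBall c |r|) u * log (r * ‖c - u‖⁻¹) := by
    refine finsum_nonneg fun u => ?_
    by_cases hu : u ∈ closedBall c |r|
    · refine mul_nonneg (mod_cast MeromorphicOn.AnalyticOnNhd.divisor_nonneg hh u) ?_
      rcases eq_or_ne c u with rfl | hne
      · simp
      · rw [mem_closedBall, abs_of_pos hr, dist_comm, dist_eq_norm] at hu
        exact log_nonneg ((one_le_div (norm_pos_iff.2 (sub_ne_zero.2 hne))).2 hu)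
    · simp [locallyFinsuppWithin.apply_eq_zero_of_notMem _ hu]
  have hmero : MeromorphicOn h (sphere c |r|) := fun z hz =>
    (hh z (sphere_subset_closedBall hz)).meromorphicAt
  calc log ‖h c‖ ≤ circleAverage (fun z => log ‖h z‖) c r := by
        rw [AnalyticOnNhd.circleAverage_log_norm hr.ne' hh h0]; linarith
    _ ≤ circleAverage (fun z => log⁺ ‖h z‖) c r :=
        circleAverage_mono hmero.circleIntegrable_log_norm hmero.circleIntegrable_posLog_norm
          fun z _ => le_max_right _ _

theorem tendsto_circleMap_nhdsLT_one (θ : ℝ) :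
    Tendsto (fun ρ => circleMap 0 ρ θ) (𝓝[<] 1) (𝓝[ball 0 1] circleMap 0 1 θ) := by
  have hcont : Continuous fun ρ : ℝ => circleMap 0 ρ θ := by unfold circleMap; fun_prop
  refine tendsto_nhdsWithin_iff.2 ⟨(hcont.tendsto 1).mono_left nhdsWithin_le_nhds, ?_⟩
  filter_upwards [Ioo_mem_nhdsLT (zero_lt_one' ℝ)] with ρ hρ
  simpa [abs_of_pos hρ.1] using hρ.2

theorem aestronglyMeasurable_comp_circleMap {h : ℂ → ℂ} (hd : ContinuousOn h (ball 0 1))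
    (hlim : ∀ᵐ θ : ℝ, ContinuousWithinAt h (ball 0 1) (circleMap 0 1 θ)) :
    AEStronglyMeasurable fun θ => h (circleMap 0 1 θ) := by
  obtain ⟨ρ, -, hρ, hρlim⟩ := exists_seq_strictMono_tendsto' (zero_lt_one' ℝ)
  refine aestronglyMeasurable_of_tendsto_ae atTop
    (f := fun n θ => h (circleMap 0 (ρ n) θ)) (fun n => ?_) ?_
  · refine (hd.comp_continuous (continuous_circleMap 0 (ρ n)) fun θ => ?_).aestronglyMeasurable
    simpa [abs_of_pos (hρ n).1] using (hρ n).2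
  · filter_upwards [hlim] with θ hθ
    exact (hθ.tendsto.comp (tendsto_circleMap_nhdsLT_one θ)).comp
      (tendsto_nhdsWithin_iff.2 ⟨hρlim, .of_forall fun n => (hρ n).2⟩)

theorem norm_le_of_continuousWithinAt_circleMap {h : ℂ → ℂ} {B θ : ℝ}
    (hB : ∀ ζ ∈ ball (0 : ℂ) 1, ‖h ζ‖ ≤ B)
    (hlim : ContinuousWithinAt h (ball 0 1) (circleMap 0 1 θ)) : ‖h (circleMap 0 1 θ)‖ ≤ B := by
  refine le_of_tendsto (hlim.tendsto.comp (tendsto_circleMap_nhdsLT_one θ)).norm ?_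
  filter_upwards [Ioo_mem_nhdsLT (zero_lt_one' ℝ)] with ρ hρ
  exact hB _ (by simpa [abs_of_pos hρ.1] using hρ.2)

theorem posLog_norm_le_circleAverage_of_continuousWithinAt {h : ℂ → ℂ} {B : ℝ}
    (hd : DifferentiableOn ℂ h (ball 0 1)) (hB : ∀ ζ ∈ ball (0 : ℂ) 1, ‖h ζ‖ ≤ B)
    (hlim : ∀ᵐ θ : ℝ, ContinuousWithinAt h (ball 0 1) (circleMap 0 1 θ)) :
    log⁺ ‖h 0‖ ≤ circleAverage (fun ζ => log⁺ ‖h ζ‖) 0 1 := by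
  have hmem : ∀ᶠ ρ in 𝓝[<] (1 : ℝ), ρ ∈ Ioo (0 : ℝ) 1 := Ioo_mem_nhdsLT zero_lt_one
  have hcircle : ∀ ρ ∈ Ioo (0 : ℝ) 1, ∀ θ, circleMap 0 ρ θ ∈ ball (0 : ℂ) 1 := fun ρ hρ θ => by
    simpa [abs_of_pos hρ.1] using hρ.2
  suffices Tendsto (circleAverage (fun ζ => log⁺ ‖h ζ‖) 0) (𝓝[<] 1)
      (𝓝 (circleAverage (fun ζ => log⁺ ‖h ζ‖) 0 1)) by
    refine ge_of_tendsto this (hmem.mono fun ρ hρ => posLog_norm_le_circleAverage hρ.1 ?_)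
    exact (hd.analyticOnNhd isOpen_ball).mono (closedBall_subset_ball hρ.2)
  refine (intervalIntegral.tendsto_integral_filter_of_dominated_convergence (fun _ => log⁺ B)
    (hmem.mono fun ρ hρ => ?_) (hmem.mono fun ρ hρ => .of_forall fun θ _ => ?_)
    intervalIntegrable_const (hlim.mono fun θ hθ _ => ?_)).const_smul _
  · exact (continuous_posLog.comp (hd.continuousOn.comp_continuous (continuous_circleMap 0 ρ)
      (hcircle ρ hρ)).norm).aestronglyMeasurable
  · rw [norm_of_nonneg posLog_nonneg]
    exact posLog_le_posLog (norm_nonneg _) (hB _ (hcircle ρ hρ θ))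
  · exact (continuous_posLog.tendsto _).comp
      (hθ.tendsto.comp (tendsto_circleMap_nhdsLT_one θ)).norm

end LogarithmicMeans

section ScaledLog

/-- A sequence that is eventually below every geometric sequence `ε ^ n` with `ε > 0`, that is,
the coefficient sequence of an entire function. -/
def SuperexponentialDecay (a : ℕ → ℂ) : Prop :=
  ∀ ε > (0 : ℝ), ∀ᶠ n in atTop, ‖a n‖ ≤ ε ^ n

/-- The nonnegative quantity `max (0, log (R * ‖w‖ ^ (1 / n)))`: it measures how far the `n`-th
term `w` of a sequence is above `R⁻¹ ^ n`, and it is subharmonic in analytic `w`. -/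
noncomputable def scaledLog (R : ℝ) (n : ℕ) (w : ℂ) : ℝ :=
  (n : ℝ)⁻¹ * log⁺ ‖(R : ℂ) ^ n * w‖

variable {R : ℝ} {n : ℕ} {w : ℂ}

theorem scaledLog_nonneg : 0 ≤ scaledLog R n w :=
  mul_nonneg (by positivity) posLog_nonneg

theorem continuous_scaledLog : Continuous (scaledLog R n) := by
  unfold scaledLog
  exact continuous_const.mul (continuous_posLog.comp (by fun_prop))

theorem norm_ofReal_pow_mul (hR : 0 < R) : ‖(R : ℂ) ^ n * w‖ = R ^ n * ‖w‖ := by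
  rw [norm_mul, norm_pow, Complex.norm_of_nonneg hR.le]

theorem scaledLog_le {C M : ℝ} (hR : 0 < R) (hn : n ≠ 0) (hw : ‖w‖ ≤ C * M ^ n) :
    scaledLog R n w ≤ log⁺ C + log⁺ (R * M) := by
  have hn1 : (1 : ℝ) ≤ n := mod_cast Nat.one_le_iff_ne_zero.2 hn
  have hlog : log⁺ ‖(R : ℂ) ^ n * w‖ ≤ log⁺ C + n * log⁺ (R * M) :=
    calc log⁺ ‖(R : ℂ) ^ n * w‖ ≤ log⁺ (C * (R * M) ^ n) := by
          refine posLog_le_posLog (norm_nonneg _) ?_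
          rw [norm_ofReal_pow_mul hR, mul_pow, mul_left_comm]
          gcongr
      _ ≤ log⁺ C + n * log⁺ (R * M) := by
          rw [← posLog_pow]; exact posLog_mul
  rw [scaledLog, inv_mul_le_iff₀ (by positivity), mul_add]
  exact hlog.trans (add_le_add_left (le_mul_of_one_le_left posLog_nonneg hn1) _)

theorem scaledLog_eq_zero (hR : 0 < R) (hw : ‖w‖ ≤ R⁻¹ ^ n) : scaledLog R n w = 0 := by
  rw [scaledLog, (posLog_eq_zero_iff _).2, mul_zero]
  rw [abs_norm, norm_ofReal_pow_mul hR]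
  calc R ^ n * ‖w‖ ≤ R ^ n * R⁻¹ ^ n := by gcongr
    _ = 1 := by rw [← mul_pow, mul_inv_cancel₀ hR.ne', one_pow]

theorem norm_le_of_scaledLog_le {T : ℝ} (hR : 0 < R) (hn : n ≠ 0) (hw : scaledLog R n w ≤ T) :
    ‖w‖ ≤ (exp T / R) ^ n := by
  rcases eq_or_ne w 0 with rfl | hw0
  · rw [norm_zero]; positivity
  have hpos : 0 < R ^ n * ‖w‖ := mul_pos (pow_pos hR n) (norm_pos_iff.2 hw0)
  rw [scaledLog, norm_ofReal_pow_mul hR, inv_mul_le_iff₀ (by positivity)] at hw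
  rw [div_pow, ← exp_nat_mul, le_div_iff₀' (by positivity), ← log_le_iff_le_exp hpos]
  exact (le_max_right _ _).trans hw

theorem SuperexponentialDecay.tendsto_scaledLog {a : ℕ → ℂ} (ha : SuperexponentialDecay a)
    (hR : 0 < R) : Tendsto (fun n => scaledLog R n (a n)) atTop (𝓝 0) :=
  tendsto_const_nhds.congr' <|
    (ha R⁻¹ (inv_pos.2 hR)).mono fun _ hn => (scaledLog_eq_zero hR hn).symm

theorem scaledLog_le_circleAverage {h : ℂ → ℂ} {B : ℝ} (hd : DifferentiableOn ℂ h (ball 0 1))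
    (hB : ∀ ζ ∈ ball (0 : ℂ) 1, ‖h ζ‖ ≤ B)
    (hlim : ∀ᵐ θ : ℝ, ContinuousWithinAt h (ball 0 1) (circleMap 0 1 θ)) :
    scaledLog R n (h 0) ≤ circleAverage (fun ζ => scaledLog R n (h ζ)) 0 1 := by
  have hmean := posLog_norm_le_circleAverage_of_continuousWithinAt
    (h := fun ζ => (R : ℂ) ^ n * h ζ) (B := ‖(R : ℂ) ^ n‖ * B) (hd.const_mul _)
    (fun ζ hζ => by rw [norm_mul]; gcongr; exact hB ζ hζ)
    (hlim.mono fun θ hθ => continuousWithinAt_const.mul hθ)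
  calc scaledLog R n (h 0)
      ≤ (n : ℝ)⁻¹ * circleAverage (fun ζ => log⁺ ‖(R : ℂ) ^ n * h ζ‖) 0 1 :=
        mul_le_mul_of_nonneg_left hmean (by positivity)
    _ = circleAverage (fun ζ => scaledLog R n (h ζ)) 0 1 :=
        (circleAverage_fun_smul (a := (n : ℝ)⁻¹)
          (f := fun ζ => log⁺ ‖(R : ℂ) ^ n * h ζ‖)).symm

end ScaledLog

section TwoConstants

theorem eventually_integral_lt_of_tendsto_zero {α : Type*} [MeasurableSpace α] {μ : Measure α}
    [IsFiniteMeasure μ] {u : ℕ → α → ℝ} {S : Set α} {K δ : ℝ} (hS : MeasurableSet S)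
    (hu : ∀ n, AEStronglyMeasurable (u n) μ) (hK : ∀ᶠ n in atTop, ∀ᵐ x ∂μ, ‖u n x‖ ≤ K)
    (hlim : ∀ x ∈ S, Tendsto (fun n => u n x) atTop (𝓝 0)) (hδ : 0 < δ) :
    ∀ᶠ n in atTop, ∫ x, u n x ∂μ < δ + K * μ.real Sᶜ := by
  have hS0 : Tendsto (fun n => ∫ x in S, u n x ∂μ) atTop (𝓝 0) := by
    simpa using tendsto_integral_filter_of_dominated_convergence (fun _ => K)
      (.of_forall fun n => (hu n).restrict) (hK.mono fun n hn => ae_restrict_of_ae hn)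
      (integrable_const K) ((ae_restrict_mem hS).mono hlim)
  filter_upwards [hS0.eventually_lt_const hδ, hK] with n hn hKn
  rw [← integral_add_compl hS (Integrable.of_bound (hu n) K hKn)]
  refine add_lt_add_of_lt_of_le hn ((le_abs_self _).trans ?_)
  exact norm_setIntegral_le_of_norm_le_const_ae (measure_lt_top _ _) (ae_restrict_of_ae hKn)

variable {h : ℕ → ℂ → ℂ} {C M : ℝ} {S : Set ℝ}

theorem eventually_scaledLog_center_le {R : ℝ} (hd : ∀ n, DifferentiableOn ℂ (h n) (ball 0 1))
    (hb : ∀ n, ∀ ζ ∈ ball (0 : ℂ) 1, ‖h n ζ‖ ≤ C * M ^ n)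
    (hlim : ∀ n, ∀ᵐ θ : ℝ, ContinuousWithinAt (h n) (ball 0 1) (circleMap 0 1 θ))
    (hS : MeasurableSet S) (hS2π : S ⊆ Ioc 0 (2 * π))
    (hdecay : ∀ θ ∈ S, SuperexponentialDecay fun n => h n (circleMap 0 1 θ)) (hR : 0 < R) :
    ∀ᶠ n in atTop, scaledLog R n (h n 0) ≤
      1 + (log⁺ C + log⁺ (R * M)) * (1 - volume.real S / (2 * π)) := by
  let u : ℕ → ℝ → ℝ := fun n θ => scaledLog R n (h n (circleMap 0 1 θ))
  have hu : ∀ n, AEStronglyMeasurable (u n) (volume.restrict (Ioc 0 (2 * π))) := fun n =>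
    (continuous_scaledLog.comp_aestronglyMeasurable
      (aestronglyMeasurable_comp_circleMap (hd n).continuousOn (hlim n))).restrict
  have huK : ∀ᶠ n in atTop, ∀ᵐ θ ∂volume.restrict (Ioc 0 (2 * π)),
      ‖u n θ‖ ≤ log⁺ C + log⁺ (R * M) := by
    filter_upwards [eventually_ne_atTop 0] with n hn
    refine ae_restrict_of_ae ((hlim n).mono fun θ hθ => ?_)
    rw [norm_of_nonneg scaledLog_nonneg]
    exact scaledLog_le hR hn (norm_le_of_continuousWithinAt_circleMap (hb n) hθ)
  have hcompl : (volume.restrict (Ioc 0 (2 * π))).real Sᶜ = 2 * π - volume.real S := by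
    rw [measureReal_restrict_apply hS.compl, inter_comm, ← sdiff_eq,
      measureReal_sdiff hS2π hS measure_Ioc_lt_top.ne,
      volume_real_Ioc_of_le (by positivity), sub_zero]
  filter_upwards [eventually_integral_lt_of_tendsto_zero hS hu huK
    (fun θ hθ => (hdecay θ hθ).tendsto_scaledLog hR) two_pi_pos] with n hn
  calc scaledLog R n (h n 0) ≤ circleAverage (fun ζ => scaledLog R n (h n ζ)) 0 1 :=
        scaledLog_le_circleAverage (hd n) (hb n) (hlim n)
    _ = (2 * π)⁻¹ * ∫ θ in Ioc 0 (2 * π), u n θ := by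
        rw [circleAverage, smul_eq_mul, intervalIntegral.integral_of_le two_pi_pos.le]
    _ ≤ (2 * π)⁻¹ * (2 * π + (log⁺ C + log⁺ (R * M)) * (2 * π - volume.real S)) := by
        rw [← hcompl]; gcongr
    _ = 1 + (log⁺ C + log⁺ (R * M)) * (1 - volume.real S / (2 * π)) := by field_simp

/-- A fixed proportion `α` of the circle contributes nothing in the limit, so the value of
`scaledLog (exp L)` at the center is at most about `(1 - α) * L`. Undoing the scaling subtracts `L`,
which leaves `-α * L`, and `L` is arbitrary. -/
theorem SuperexponentialDecay.of_forall_mem_circle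
    (hd : ∀ n, DifferentiableOn ℂ (h n) (ball 0 1))
    (hb : ∀ n, ∀ ζ ∈ ball (0 : ℂ) 1, ‖h n ζ‖ ≤ C * M ^ n)
    (hlim : ∀ n, ∀ᵐ θ : ℝ, ContinuousWithinAt (h n) (ball 0 1) (circleMap 0 1 θ))
    (hS : MeasurableSet S) (hS2π : S ⊆ Ioc 0 (2 * π)) (hS0 : 0 < volume.real S)
    (hdecay : ∀ θ ∈ S, SuperexponentialDecay fun n => h n (circleMap 0 1 θ)) :
    SuperexponentialDecay fun n => h n 0 := by
  intro ε hε
  let α := volume.real S / (2 * π)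
  have hα0 : 0 < α := by positivity
  have hα1 : α ≤ 1 := by
    refine (div_le_one two_pi_pos).2 ((measureReal_mono hS2π measure_Ioc_lt_top.ne).trans_eq ?_)
    rw [volume_real_Ioc_of_le two_pi_pos.le, sub_zero]
  let c := log⁺ C + log⁺ M
  have hc : 0 ≤ c := add_nonneg posLog_nonneg posLog_nonneg
  obtain ⟨L, hL0, hL⟩ : ∃ L, 0 ≤ L ∧ 1 + c - log ε ≤ α * L :=
    ⟨max 0 ((1 + c - log ε) / α), le_max_left _ _,
      by rw [← div_le_iff₀' hα0]; exact le_max_right _ _⟩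
  have hK : log⁺ C + log⁺ (exp L * M) ≤ c + L := by
    have hexp : log⁺ (exp L) = L := by rw [posLog_apply, log_exp, max_eq_right hL0]
    linarith [posLog_mul (x := exp L) (y := M)]
  filter_upwards [eventually_scaledLog_center_le hd hb hlim hS hS2π hdecay (exp_pos L),
    eventually_ne_atTop 0] with n hn hn0
  refine (norm_le_of_scaledLog_le (exp_pos L) hn0 hn).trans (pow_le_pow_left₀ (by positivity) ?_ n)
  rw [← exp_sub, ← le_log_iff_exp_le hε]
  calc 1 + (log⁺ C + log⁺ (exp L * M)) * (1 - α) - L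
      ≤ 1 + (c + L) * (1 - α) - L := by gcongr
    _ ≤ log ε := by nlinarith

end TwoConstants

section AnalyticFamilies

variable {E : Type*} [NormedAddCommGroup E] [NormedSpace ℂ E]

/-- The functions `a n` are analytic near `p` and jointly bounded there by a geometric sequence, as
are the Taylor coefficients in `s` of a function of `(z, s)` that is analytic near `(p, 0)`. -/
def GeometricAnalyticAt (a : ℕ → E → ℂ) (p : E) : Prop :=
  ∃ C M : ℝ, ∀ᶠ z in 𝓝 p, ∀ n, AnalyticAt ℂ (a n) z ∧ ‖a n z‖ ≤ C * M ^ n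

theorem SuperexponentialDecay.of_disc {a : ℕ → E → ℂ} {C M : ℝ} {V : Set E}
    (ha : ∀ z ∈ V, ∀ n, AnalyticAt ℂ (a n) z ∧ ‖a n z‖ ≤ C * M ^ n) {γ : ℂ → E} {N : Set ℂ}
    (hN : N.Countable) (hN1 : Disjoint (ball 0 1) N)
    (hγ : ∀ ζ ∈ closedBall 0 1 \ N, DifferentiableAt ℂ γ ζ ∧ γ ζ ∈ V) {S : Set ℝ}
    (hS : IsOpen S) (hS2π : S ⊆ Ioc 0 (2 * π)) (hS0 : S.Nonempty)
    (hdecay : ∀ θ ∈ S, SuperexponentialDecay fun n => a n (γ (circleMap 0 1 θ))) :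
    SuperexponentialDecay fun n => a n (γ 0) := by
  have hball : ∀ ζ ∈ ball (0 : ℂ) 1, ζ ∈ closedBall 0 1 \ N := fun ζ hζ =>
    ⟨ball_subset_closedBall hζ, disjoint_left.1 hN1 hζ⟩
  have hdiff : ∀ n, ∀ ζ ∈ closedBall 0 1 \ N, DifferentiableAt ℂ (fun ζ => a n (γ ζ)) ζ :=
    fun n ζ hζ => (ha _ (hγ ζ hζ).2 n).1.differentiableAt.comp ζ (hγ ζ hζ).1
  refine of_forall_mem_circle (h := fun n ζ => a n (γ ζ))
    (fun n ζ hζ => (hdiff n ζ (hball ζ hζ)).differentiableWithinAt)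
    (fun n ζ hζ => (ha _ (hγ ζ (hball ζ hζ)).2 n).2) (fun n => ?_) hS.measurableSet hS2π ?_ hdecay
  · filter_upwards [(hN.preimage_circleMap 0 one_ne_zero).ae_notMem volume] with θ hθ
    exact (hdiff n _ ⟨circleMap_mem_closedBall 0 zero_le_one θ, hθ⟩).continuousAt.continuousWithinAt
  · exact ENNReal.toReal_pos (hS.measure_pos volume hS0).ne'
      ((measure_mono hS2π).trans_lt measure_Ioc_lt_top).ne

theorem GeometricAnalyticAt.eventually_superexponentialDecay_of_mem_closure {a : ℕ → E → ℂ} {p : E}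
    (ha : GeometricAnalyticAt a p)
    (hp : p ∈ closure {z | ∀ᶠ w in 𝓝 z, SuperexponentialDecay fun n => a n w}) :
    ∀ᶠ z in 𝓝 p, SuperexponentialDecay fun n => a n z := by
  obtain ⟨C, M, h⟩ := ha
  obtain ⟨δ, hδ, hV⟩ := eventually_nhds_iff_ball.1 h
  obtain ⟨q, hq, hqp⟩ := mem_closure_iff.1 hp (δ / 3) (by positivity)
  filter_upwards [ball_mem_nhds p (show 0 < δ / 3 by positivity)] with z hz
  have hdisc : ∀ ζ ∈ closedBall (0 : ℂ) 1, z + ζ • (z - q) ∈ ball p δ := fun ζ hζ => by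
    have hζ' : ‖ζ • (z - q)‖ ≤ dist z q := by
      rw [norm_smul, dist_eq_norm]
      exact mul_le_of_le_one_left (norm_nonneg _) (mem_closedBall_zero_iff.1 hζ)
    rw [mem_ball, dist_eq_norm, add_sub_right_comm]
    linarith [norm_add_le (z - p) (ζ • (z - q)), dist_eq_norm z p, dist_triangle_right z q p,
      dist_comm p q, mem_ball.1 hz]
  let S := Ioo 0 (2 * π) ∩ (fun θ => z + circleMap 0 1 θ • (z - q)) ⁻¹'
    {z | ∀ᶠ w in 𝓝 z, SuperexponentialDecay fun n => a n w}
  have hS : IsOpen S := isOpen_Ioo.inter (isOpen_setOfPred_eventually_nhds.preimage (by fun_prop))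
  have hπ : π ∈ S := ⟨⟨pi_pos, by linarith [pi_pos]⟩, by simpa [circleMap] using hq⟩
  simpa using SuperexponentialDecay.of_disc hV (γ := fun ζ => z + ζ • (z - q)) countable_empty
    (disjoint_empty _) (fun ζ hζ => ⟨by fun_prop, hdisc ζ hζ.1⟩) hS
    (inter_subset_left.trans Ioo_subset_Ioc_self) ⟨π, hπ⟩ fun θ hθ => hθ.2.self_of_nhds

theorem superexponentialDecay_of_isPreconnected {a : ℕ → E → ℂ} {U : Set E} {p : E}
    (hU : IsPreconnected U) (ha : ∀ z ∈ U, GeometricAnalyticAt a z) (hp : p ∈ U)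
    (hdecay : ∀ᶠ z in 𝓝 p, SuperexponentialDecay fun n => a n z) :
    ∀ z ∈ U, SuperexponentialDecay fun n => a n z :=
  fun _ hz => (hU.subset_of_closure_inter_subset isOpen_setOfPred_eventually_nhds ⟨p, hp, hdecay⟩
    (fun w hw => (ha w hw.2).eventually_superexponentialDecay_of_mem_closure hw.1) hz).self_of_nhds

end AnalyticFamilies

section RealSlice

/-- An analytic disc centered at `I` that takes real values on the open upper half of the unit
circle: the half-plane coordinate `(1 + ζ) / (1 - ζ)` has argument `π / 2` there, so the logarithm
minus `π / 2 * I` is real, and the sine keeps the disc bounded. -/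
noncomputable def arcDisc (ζ : ℂ) : ℂ :=
  -Complex.sin (Complex.log ((1 + ζ) / (1 - ζ)) - (π / 2 : ℝ) * Complex.I) / (sinh (π / 2) : ℝ)

theorem sinh_pi_div_two_pos : 0 < sinh (π / 2) := sinh_pos_iff.2 pi_div_two_pos

theorem arcDisc_zero : arcDisc 0 = Complex.I := by
  have h : Complex.sinh (π / 2) ≠ 0 := mod_cast sinh_pi_div_two_pos.ne'
  simp [arcDisc, Complex.sin_mul_I, h]

theorem re_one_add_div_one_sub (ζ : ℂ) :
    ((1 + ζ) / (1 - ζ)).re = (1 - ‖ζ‖ ^ 2) / Complex.normSq (1 - ζ) := by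
  rw [Complex.div_re, ← Complex.normSq_eq_norm_sq, Complex.normSq_apply ζ]
  simp only [Complex.add_re, Complex.sub_re, Complex.add_im, Complex.sub_im, Complex.one_re,
    Complex.one_im]
  ring

theorem im_one_add_div_one_sub (ζ : ℂ) :
    ((1 + ζ) / (1 - ζ)).im = 2 * ζ.im / Complex.normSq (1 - ζ) := by
  rw [Complex.div_im]
  simp only [Complex.add_re, Complex.sub_re, Complex.add_im, Complex.sub_im, Complex.one_re,
    Complex.one_im]
  ring

theorem arg_one_add_div_one_sub_mem_Icc {ζ : ℂ} (hζ : ‖ζ‖ ≤ 1) :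
    Complex.arg ((1 + ζ) / (1 - ζ)) ∈ Icc (-(π / 2)) (π / 2) := by
  rw [mem_Icc, ← abs_le, Complex.abs_arg_le_pi_div_two_iff, re_one_add_div_one_sub]
  exact div_nonneg (sub_nonneg.2 (pow_le_one₀ (norm_nonneg ζ) hζ)) (Complex.normSq_nonneg _)

theorem norm_sin_le_cosh_im (z : ℂ) : ‖Complex.sin z‖ ≤ cosh z.im := by
  rw [Complex.sin, norm_div, norm_mul, Complex.norm_I, mul_one, Complex.norm_ofNat, cosh_eq]
  gcongr
  simpa [Complex.norm_exp] using
    norm_sub_le (Complex.exp (-z * Complex.I)) (Complex.exp (z * Complex.I))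

theorem norm_arcDisc_le {ζ : ℂ} (hζ : ‖ζ‖ ≤ 1) : ‖arcDisc ζ‖ ≤ cosh π / sinh (π / 2) := by
  rw [arcDisc, norm_div, norm_neg, Complex.norm_of_nonneg sinh_pi_div_two_pos.le]
  refine div_le_div_of_nonneg_right ?_ sinh_pi_div_two_pos.le
  refine (norm_sin_le_cosh_im _).trans (cosh_le_cosh.2 ?_)
  have harg := arg_one_add_div_one_sub_mem_Icc hζ
  have him : (Complex.log ((1 + ζ) / (1 - ζ)) - (π / 2 : ℝ) * Complex.I).im =
      Complex.arg ((1 + ζ) / (1 - ζ)) - π / 2 := by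
    rw [Complex.sub_im, Complex.log_im, Complex.im_ofReal_mul, Complex.I_im, mul_one]
  rw [him, abs_of_pos pi_pos]
  exact abs_le.2 ⟨by linarith [harg.1], by linarith [harg.2, pi_pos]⟩

theorem arcDisc_circleMap_im {θ : ℝ} (hθ : θ ∈ Ioo 0 π) : (arcDisc (circleMap 0 1 θ)).im = 0 := by
  have him : (circleMap 0 1 θ).im = Real.sin θ := by simp [circleMap, Complex.exp_ofReal_mul_I_im]
  have hsin := sin_pos_of_mem_Ioo hθ
  have hne : 1 - circleMap 0 1 θ ≠ 0 := fun h => by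
    have := congr(Complex.im $h)
    rw [Complex.sub_im, him, Complex.one_im, Complex.zero_im] at this
    linarith
  have harg : Complex.arg ((1 + circleMap 0 1 θ) / (1 - circleMap 0 1 θ)) = π / 2 := by
    rw [Complex.arg_eq_pi_div_two_iff, re_one_add_div_one_sub, im_one_add_div_one_sub, him]
    refine ⟨by simp, div_pos (by linarith) (Complex.normSq_pos.2 hne)⟩
  rw [arcDisc, Complex.log, harg, add_sub_cancel_right, ← Complex.ofReal_sin, ← Complex.ofReal_neg,
    ← Complex.ofReal_div, Complex.ofReal_im]

theorem differentiableAt_arcDisc {ζ : ℂ} (hζ : ‖ζ‖ ≤ 1) (h1 : ζ ≠ 1) (h2 : ζ ≠ -1) :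
    DifferentiableAt ℂ arcDisc ζ := by
  have hsub : 1 - ζ ≠ 0 := sub_ne_zero.2 h1.symm
  have hne : (1 + ζ) / (1 - ζ) ≠ 0 :=
    div_ne_zero (fun h => h2 (eq_neg_of_add_eq_zero_right h)) hsub
  have hslit : (1 + ζ) / (1 - ζ) ∈ Complex.slitPlane := by
    rw [Complex.mem_slitPlane_iff_arg]
    exact ⟨((arg_one_add_div_one_sub_mem_Icc hζ).2.trans_lt (by linarith [pi_pos])).ne, hne⟩
  unfold arcDisc
  fun_prop (disch := assumption)

theorem norm_ofReal_re_le {ι : Type*} [Fintype ι] (z : ι → ℂ) :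
    ‖fun j => ((z j).re : ℂ)‖ ≤ ‖z‖ :=
  (pi_norm_le_iff_of_nonneg (norm_nonneg _)).2 fun j => by
    rw [Complex.norm_real]
    exact (Complex.abs_re_le_norm _).trans (norm_le_pi_norm z j)

theorem norm_ofReal_im_le {ι : Type*} [Fintype ι] (z : ι → ℂ) :
    ‖fun j => ((z j).im : ℂ)‖ ≤ ‖z‖ :=
  (pi_norm_le_iff_of_nonneg (norm_nonneg _)).2 fun j => by
    rw [Complex.norm_real]
    exact (Complex.abs_im_le_norm _).trans (norm_le_pi_norm z j)

theorem GeometricAnalyticAt.eventually_superexponentialDecay_of_real {ι : Type*} [Fintype ι]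
    {a : ℕ → (ι → ℂ) → ℂ} {x0 : ι → ℂ} (hx0 : ∀ j, (x0 j).im = 0) (ha : GeometricAnalyticAt a x0)
    (hdecay : ∀ᶠ x in 𝓝 x0, (∀ j, (x j).im = 0) → SuperexponentialDecay fun n => a n x) :
    ∀ᶠ z in 𝓝 x0, SuperexponentialDecay fun n => a n z := by
  obtain ⟨C, M, h⟩ := ha
  obtain ⟨δ, hδ, hV⟩ := eventually_nhds_iff_ball.1 (h.and hdecay)
  let B := cosh π / sinh (π / 2)
  filter_upwards [ball_mem_nhds x0 (show 0 < δ / (1 + B) by positivity)] with z hz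
  let x : ι → ℂ := fun j => (z j).re
  let y : ι → ℂ := fun j => (z j).im
  have hx : ‖x - x0‖ ≤ ‖z - x0‖ := by
    have hre : x - x0 = fun j => (((z - x0) j).re : ℂ) :=
      funext fun j => Complex.ext (by simp [x]) (by simp [x, hx0 j])
    exact hre ▸ norm_ofReal_re_le (z - x0)
  have hy : ‖y‖ ≤ ‖z - x0‖ := by
    have him : y = fun j => (((z - x0) j).im : ℂ) := funext fun j => by simp [y, hx0 j]
    exact him ▸ norm_ofReal_im_le (z - x0)
  have hdisc : ∀ ζ ∈ closedBall (0 : ℂ) 1, x + arcDisc ζ • y ∈ ball x0 δ := fun ζ hζ => by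
    rw [mem_ball_iff_norm, add_sub_right_comm]
    calc ‖x - x0 + arcDisc ζ • y‖ ≤ ‖z - x0‖ + B * ‖z - x0‖ := by
          refine norm_add_le_of_le hx ?_
          rw [norm_smul]
          gcongr
          exact norm_arcDisc_le (mem_closedBall_zero_iff.1 hζ)
      _ = ‖z - x0‖ * (1 + B) := by ring
      _ < δ := (lt_div_iff₀ (by positivity)).1 (mem_ball_iff_norm.1 hz)
  have hcenter : x + arcDisc 0 • y = z := by
    ext j
    simp [x, y, arcDisc_zero, mul_comm Complex.I, Complex.re_add_im]
  rw [← hcenter]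
  refine SuperexponentialDecay.of_disc (fun w hw => (hV w hw).1) (γ := fun ζ => x + arcDisc ζ • y)
    (Set.toFinite {1, -1}).countable (by simp) (fun ζ hζ => ⟨?_, hdisc ζ hζ.1⟩)
    isOpen_Ioo (fun θ hθ => ⟨hθ.1, by linarith [hθ.2, pi_pos]⟩) (nonempty_Ioo.2 pi_pos)
    fun θ hθ => (hV _ (hdisc _ (circleMap_mem_closedBall 0 zero_le_one θ))).2 fun j => ?_
  · have hζN : ζ ≠ 1 ∧ ζ ≠ -1 := by simpa using hζ.2
    exact ((differentiableAt_arcDisc (mem_closedBall_zero_iff.1 hζ.1) hζN.1 hζN.2).smul_const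
      y).const_add x
  · simp [x, y, arcDisc_circleMap_im hθ]

end RealSlice

section HartogsLemma

theorem measurePreserving_linearIsometryEquiv {E : Type*} [NormedAddCommGroup E] [NormedSpace ℝ E]
    [FiniteDimensional ℝ E] [MeasurableSpace E] [BorelSpace E] (μ : Measure E)
    [μ.IsAddHaarMeasure] (L : E ≃ₗᵢ[ℝ] E) : MeasurePreserving L μ μ := by
  have hdet : LinearMap.det (L.toLinearEquiv : E →ₗ[ℝ] E) ≠ 0 := L.toLinearEquiv.isUnit_det'.ne_zero
  have hmap := μ.map_linearMap_addHaar_eq_smul_addHaar hdet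
  have hball : Measure.map L μ (ball 0 1) = μ (ball 0 1) := by
    rw [Measure.map_apply L.continuous.measurable measurableSet_ball, L.preimage_ball, map_zero]
  refine ⟨L.continuous.measurable, ?_⟩
  change Measure.map L μ = _ • μ at hmap
  rw [hmap, Measure.smul_apply, smul_eq_mul, ENNReal.mul_eq_right
    (measure_ball_pos μ 0 one_pos).ne' measure_ball_lt_top.ne] at hball
  rw [hmap, hball, one_smul]

theorem eventually_setIntegral_scaledLog_lt {E : Type*} [NormedAddCommGroup E]
    [NormedSpace ℂ E] [MeasurableSpace E] [OpensMeasurableSpace E] {μ : Measure E}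
    {a : ℕ → E → ℂ} {V : Set E} {R C M η : ℝ} (hV : MeasurableSet V) (hμV : μ V < ⊤)
    (ha : ∀ z ∈ V, ∀ n, AnalyticAt ℂ (a n) z ∧ ‖a n z‖ ≤ C * M ^ n)
    (hdecay : ∀ z ∈ V, SuperexponentialDecay fun n => a n z) (hR : 0 < R) (hη : 0 < η) :
    ∀ᶠ n in atTop, IntegrableOn (fun x => scaledLog R n (a n x)) V μ ∧
      ∫ x in V, scaledLog R n (a n x) ∂μ < η := by
  have hmeas : ∀ n, AEStronglyMeasurable (fun x => scaledLog R n (a n x)) (μ.restrict V) :=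
    fun n => (continuous_scaledLog.comp_continuousOn fun x hx =>
      (ha x hx n).1.continuousAt.continuousWithinAt).aestronglyMeasurable hV
  have hK : ∀ᶠ n in atTop, ∀ᵐ x ∂μ.restrict V,
      ‖scaledLog R n (a n x)‖ ≤ log⁺ C + log⁺ (R * M) := by
    filter_upwards [eventually_ne_atTop 0] with n hn
    filter_upwards [ae_restrict_mem hV] with x hx
    rw [norm_of_nonneg scaledLog_nonneg]
    exact scaledLog_le hR hn (ha x hx n).2
  have : IsFiniteMeasure (μ.restrict V) := ⟨by simpa using hμV⟩
  have hcompl : (μ.restrict V).real Vᶜ = 0 := by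
    rw [measureReal_restrict_apply hV.compl, compl_inter_self, measureReal_empty]
  filter_upwards [hK, eventually_integral_lt_of_tendsto_zero hV hmeas hK
    (fun x hx => (hdecay x hx).tendsto_scaledLog hR) hη] with n hKn hn
  exact ⟨.of_bound hμV (hmeas n) _ hKn, by simpa [hcompl] using hn⟩

variable {E : Type*} [NormedAddCommGroup E] [NormedSpace ℂ E] [FiniteDimensional ℂ E]
  [MeasurableSpace E] [BorelSpace E] {μ : Measure E} [μ.IsAddHaarMeasure]

theorem measurePreserving_smul_of_norm_eq_one {c : ℂ} (hc : ‖c‖ = 1) :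
    MeasurePreserving (c • · : E → E) μ μ := by
  have : FiniteDimensional ℝ E := .complexToReal E
  have hc0 : c ≠ 0 := norm_ne_zero_iff.1 (by simp [hc])
  exact measurePreserving_linearIsometryEquiv μ
    { (LinearEquiv.smulOfNeZero ℂ E c hc0).restrictScalars ℝ with
      norm_map' := fun x => by simp [norm_smul, hc] }

theorem setIntegral_ball_add_smul (v : E → ℝ) (z : E) (r : ℝ) {c : ℂ} (hc : ‖c‖ = 1) :
    ∫ w in ball 0 r, v (z + c • w) ∂μ = ∫ x in ball z r, v x ∂μ := by
  have hc0 : c ≠ 0 := norm_ne_zero_iff.1 (by simp [hc])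
  have hpre : (fun w => z + c • w) ⁻¹' ball z r = ball 0 r := by
    ext w
    simp [norm_smul, hc]
  rw [← hpre]
  exact ((measurePreserving_add_left μ z).comp
    (measurePreserving_smul_of_norm_eq_one hc)).setIntegral_preimage_emb
    ((Homeomorph.smulOfNeZero c hc0).trans (Homeomorph.addLeft z)).measurableEmbedding v _

variable {v : E → ℝ} {z : E} {r K : ℝ}

theorem integrable_comp_add_circleMap_smul (hv : ContinuousOn v (ball z r))
    (hK : ∀ x ∈ ball z r, ‖v x‖ ≤ K) :
    Integrable (fun q : E × ℝ => v (z + circleMap 0 1 q.2 • q.1))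
      ((μ.restrict (ball 0 r)).prod (volume.restrict (Ioc 0 (2 * π)))) := by
  have : FiniteDimensional ℝ E := .complexToReal E
  have hmeas : MeasurableSet (ball (0 : E) r ×ˢ Ioc 0 (2 * π)) :=
    measurableSet_ball.prod measurableSet_Ioc
  have hmaps : MapsTo (fun q : E × ℝ => z + circleMap 0 1 q.2 • q.1)
      (ball (0 : E) r ×ˢ Ioc 0 (2 * π)) (ball z r) := fun q hq => by
    simpa [norm_smul] using hq.1
  rw [Measure.prod_restrict]
  refine IntegrableOn.of_bound ?_ ((hv.comp ?_ hmaps).aestronglyMeasurable hmeas) K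
    ((ae_restrict_mem hmeas).mono fun q hq => hK _ (hmaps hq))
  · rw [Measure.prod_prod]
    exact ENNReal.mul_lt_top measure_ball_lt_top measure_Ioc_lt_top
  · exact (continuous_const.add
      (((continuous_circleMap 0 1).comp continuous_snd).smul continuous_fst)).continuousOn

theorem mul_measureReal_ball_le_setIntegral (hv : ContinuousOn v (ball z r))
    (hK : ∀ x ∈ ball z r, ‖v x‖ ≤ K)
    (hmean : ∀ w ∈ ball (0 : E) r, v z ≤ circleAverage (fun ζ => v (z + ζ • w)) 0 1) :
    v z * μ.real (ball 0 r) ≤ ∫ x in ball z r, v x ∂μ := by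
  have : FiniteDimensional ℝ E := .complexToReal E
  have hint := integrable_comp_add_circleMap_smul (μ := μ) hv hK
  calc v z * μ.real (ball 0 r) = ∫ _ in ball (0 : E) r, v z ∂μ := by
        rw [setIntegral_const, smul_eq_mul, mul_comm]
    _ ≤ ∫ w in ball (0 : E) r,
          ((2 * π)⁻¹ * ∫ θ in Ioc 0 (2 * π), v (z + circleMap 0 1 θ • w)) ∂μ := by
        refine setIntegral_mono_on (integrableOn_const measure_ball_lt_top.ne)
          (hint.integral_prod_left.const_mul _) measurableSet_ball
            fun w hw => (hmean w hw).trans_eq ?_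
        rw [circleAverage, smul_eq_mul, intervalIntegral.integral_of_le two_pi_pos.le]
    _ = (2 * π)⁻¹ * ∫ θ in Ioc 0 (2 * π), ∫ w in ball (0 : E) r,
          v (z + circleMap 0 1 θ • w) ∂μ := by
        rw [integral_const_mul,
          integral_integral_swap (f := fun w θ => v (z + circleMap 0 1 θ • w)) hint]
    _ = (2 * π)⁻¹ * ∫ _ in Ioc 0 (2 * π), ∫ x in ball z r, v x ∂μ := by
        simp only [setIntegral_ball_add_smul v z r (norm_circleMap_zero 1 _ |>.trans abs_one)]
    _ = ∫ x in ball z r, v x ∂μ := by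
        rw [setIntegral_const, volume_real_Ioc_of_le two_pi_pos.le, sub_zero, smul_eq_mul,
          inv_mul_cancel_left₀ two_pi_pos.ne']

theorem scaledLog_mul_measureReal_ball_le_setIntegral {g : E → ℂ} {R C M : ℝ} {n : ℕ}
    (hR : 0 < R) (hn : n ≠ 0) (hg : AnalyticOnNhd ℂ g (ball z r))
    (hb : ∀ x ∈ ball z r, ‖g x‖ ≤ C * M ^ n) :
    scaledLog R n (g z) * μ.real (ball 0 r) ≤ ∫ x in ball z r, scaledLog R n (g x) ∂μ := by
  refine mul_measureReal_ball_le_setIntegral (v := fun x => scaledLog R n (g x))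
    (continuous_scaledLog.comp_continuousOn hg.continuousOn) (K := log⁺ C + log⁺ (R * M))
    (fun x hx => ?_) fun w hw => ?_
  · rw [norm_of_nonneg scaledLog_nonneg]
    exact scaledLog_le hR hn (hb x hx)
  · have hmem : ∀ ζ ∈ closedBall (0 : ℂ) 1, z + ζ • w ∈ ball z r := fun ζ hζ => by
      rw [mem_ball_iff_norm, add_sub_cancel_left, norm_smul]
      exact (mul_le_of_le_one_left (norm_nonneg w) (mem_closedBall_zero_iff.1 hζ)).trans_lt
        (mem_ball_zero_iff.1 hw)
    have hdiff : ∀ ζ ∈ closedBall (0 : ℂ) 1, DifferentiableAt ℂ (fun ζ => g (z + ζ • w)) ζ :=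
      fun ζ hζ => (hg _ (hmem ζ hζ)).differentiableAt.comp ζ (by fun_prop)
    simpa using scaledLog_le_circleAverage (h := fun ζ => g (z + ζ • w))
      (fun ζ hζ => (hdiff ζ (ball_subset_closedBall hζ)).differentiableWithinAt)
      (fun ζ hζ => hb _ (hmem ζ (ball_subset_closedBall hζ)))
      (.of_forall fun θ => (hdiff _
        (circleMap_mem_closedBall 0 zero_le_one θ)).continuousAt.continuousWithinAt)

end HartogsLemma

theorem GeometricAnalyticAt.exists_mem_nhds_eventually_norm_le_pow {E : Type*}
    [NormedAddCommGroup E] [NormedSpace ℂ E] [FiniteDimensional ℂ E] {a : ℕ → E → ℂ} {p : E}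
    (ha : GeometricAnalyticAt a p)
    (hdecay : ∀ᶠ z in 𝓝 p, SuperexponentialDecay fun n => a n z) {ε : ℝ} (hε : 0 < ε) :
    ∃ V ∈ 𝓝 p, ∀ᶠ n in atTop, ∀ z ∈ V, ‖a n z‖ ≤ ε ^ n := by
  have : FiniteDimensional ℝ E := .complexToReal E
  borelize E
  let μ : Measure E := Measure.addHaar
  obtain ⟨C, M, h⟩ := ha
  obtain ⟨δ, hδ, hV⟩ := eventually_nhds_iff_ball.1 (h.and hdecay)
  have hvol : 0 < μ.real (ball 0 (δ / 2)) :=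
    ENNReal.toReal_pos (measure_ball_pos μ 0 (half_pos hδ)).ne' measure_ball_lt_top.ne
  let R := exp 1 / ε
  have hR : 0 < R := by positivity
  refine ⟨ball p (δ / 2), ball_mem_nhds p (half_pos hδ), ?_⟩
  filter_upwards [eventually_setIntegral_scaledLog_lt (μ := μ) measurableSet_ball
    measure_ball_lt_top (fun z hz => (hV z hz).1) (fun z hz => (hV z hz).2) hR hvol,
    eventually_ne_atTop 0] with n hn hn0 x hx
  have hsub : ball x (δ / 2) ⊆ ball p δ := ball_subset_ball' (by linarith [mem_ball.1 hx])
  have hmean : scaledLog R n (a n x) * μ.real (ball 0 (δ / 2)) ≤ 1 * μ.real (ball 0 (δ / 2)) :=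
    calc scaledLog R n (a n x) * μ.real (ball 0 (δ / 2))
        ≤ ∫ y in ball x (δ / 2), scaledLog R n (a n y) ∂μ :=
          scaledLog_mul_measureReal_ball_le_setIntegral hR hn0
            (fun y hy => ((hV y (hsub hy)).1 n).1) fun y hy => ((hV y (hsub hy)).1 n).2
      _ ≤ ∫ y in ball p δ, scaledLog R n (a n y) ∂μ :=
          setIntegral_mono_set hn.1 (.of_forall fun _ => scaledLog_nonneg) hsub.eventuallyLE
      _ ≤ 1 * μ.real (ball 0 (δ / 2)) := (hn.2.trans_eq (one_mul _).symm).le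
  have hRε : exp 1 / R = ε := div_div_cancel₀ (exp_pos 1).ne'
  rw [← hRε]
  exact norm_le_of_scaledLog_le hR hn0 (le_of_mul_le_mul_right hmean hvol)

section TaylorCoefficients

/-- The `n`-th coefficient of the Taylor series of `g` at `0`. -/
noncomputable def taylorCoeff (g : ℂ → ℂ) (n : ℕ) : ℂ :=
  (n ! : ℂ)⁻¹ * iteratedDeriv n g 0

theorem norm_taylorCoeff_le {g : ℂ → ℂ} {ρ C : ℝ} (hρ : 0 < ρ)
    (hg : DiffContOnCl ℂ g (ball 0 ρ)) (hC : ∀ s ∈ sphere 0 ρ, ‖g s‖ ≤ C) (n : ℕ) :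
    ‖taylorCoeff g n‖ ≤ C * ρ⁻¹ ^ n := by
  rw [taylorCoeff, norm_mul, norm_inv, Complex.norm_natCast, inv_mul_le_iff₀ (by positivity),
    inv_pow, ← div_eq_mul_inv, mul_div_assoc']
  exact Complex.norm_iteratedDeriv_le_of_forall_mem_sphere_norm_le n hρ hg hC

theorem hasSum_taylorCoeff {g : ℂ → ℂ} {r : ℝ} (hg : DifferentiableOn ℂ g (ball 0 r)) {s : ℂ}
    (hs : s ∈ ball 0 r) : HasSum (fun n => taylorCoeff g n * s ^ n) (g s) := by
  simpa [taylorCoeff, mul_comm (s ^ _), mul_assoc] using Complex.hasSum_taylorSeries_on_ball hg hs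

theorem superexponentialDecay_taylorCoeff {g : ℂ → ℂ} (hg : Differentiable ℂ g) :
    SuperexponentialDecay (taylorCoeff g) := by
  intro ε hε
  obtain ⟨C, hC⟩ := (isCompact_sphere (0 : ℂ) (2 / ε)).exists_bound_of_continuousOn
    hg.continuous.continuousOn
  have hlim : Tendsto (fun n : ℕ => C * (1 / 2 : ℝ) ^ n) atTop (𝓝 0) := by
    simpa using (tendsto_pow_atTop_nhds_zero_of_lt_one (r := (1 / 2 : ℝ)) (by norm_num)
      (by norm_num)).const_mul C
  filter_upwards [hlim.eventually_le_const one_pos] with n hn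
  calc ‖taylorCoeff g n‖ ≤ C * (2 / ε)⁻¹ ^ n :=
        norm_taylorCoeff_le (by positivity) hg.diffContOnCl hC n
    _ = C * (1 / 2) ^ n * ε ^ n := by rw [inv_div, div_eq_mul_one_div, mul_pow]; ring
    _ ≤ ε ^ n := mul_le_of_le_one_left (by positivity) hn

variable {E : Type*} [NormedAddCommGroup E] [NormedSpace ℂ E] {f : E × ℂ → ℂ} {U : Set E} {r : ℝ}

theorem analyticOnNhd_taylorCoeff_slice (hU : IsOpen U) (hr : 0 < r)
    (hf : AnalyticOnNhd ℂ f (U ×ˢ ball 0 r)) (n : ℕ) :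
    AnalyticOnNhd ℂ (fun z => taylorCoeff (fun s => f (z, s)) n) U := by
  intro p hp
  have hline : ∀ z ∈ U, taylorCoeff (fun s => f (z, s)) n =
      (n ! : ℂ)⁻¹ * iteratedFDeriv ℂ n f (z, 0) fun _ => (0, 1) := fun z hz => by
    rw [taylorCoeff, ← iteratedDeriv_line_eq_iteratedFDeriv (hU.prod isOpen_ball) hf
      ⟨hz, mem_ball_self hr⟩]
    simp
  have hfderiv : AnalyticAt ℂ (fun z => iteratedFDeriv ℂ n f (z, 0)) p :=
    AnalyticAt.comp (f := fun z => (z, (0 : ℂ)))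
      (hf.iteratedFDeriv n (p, 0) ⟨hp, mem_ball_self hr⟩) (by fun_prop)
  refine (analyticAt_const.mul ?_).congr
    (eventually_of_mem (hU.mem_nhds hp) fun z hz => (hline z hz).symm)
  exact ((ContinuousMultilinearMap.apply ℂ (fun _ : Fin n => E × ℂ) ℂ
    fun _ => (0, 1)).analyticAt _).comp hfderiv

theorem differentiableOn_slice (hf : AnalyticOnNhd ℂ f (U ×ˢ ball 0 r)) {z : E} (hz : z ∈ U) :
    DifferentiableOn ℂ (fun s => f (z, s)) (ball 0 r) := fun s hs =>
  ((hf (z, s) ⟨hz, hs⟩).differentiableAt.comp s (by fun_prop)).differentiableWithinAt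

theorem geometricAnalyticAt_taylorCoeff_slice (hU : IsOpen U) (hr : 0 < r)
    (hf : AnalyticOnNhd ℂ f (U ×ˢ ball 0 r)) {p : E} (hp : p ∈ U) :
    GeometricAnalyticAt (fun n z => taylorCoeff (fun s => f (z, s)) n) p := by
  have hp0 : (p, (0 : ℂ)) ∈ U ×ˢ ball 0 r := ⟨hp, mem_ball_self hr⟩
  have hbound : ∀ᶠ q in 𝓝 (p, (0 : ℂ)), ‖f q‖ < ‖f (p, 0)‖ + 1 :=
    (hf _ hp0).continuousAt.norm.eventually_lt_const (lt_add_one _)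
  obtain ⟨ε, hε, h⟩ := eventually_nhds_iff_ball.1
    (hbound.and ((hU.prod isOpen_ball).eventually_mem hp0))
  simp only [← ball_prod_same, Prod.forall] at h
  have hsub : closedBall (0 : ℂ) (ε / 2) ⊆ ball 0 ε := closedBall_subset_ball (half_lt_self hε)
  refine ⟨‖f (p, 0)‖ + 1, (ε / 2)⁻¹, ?_⟩
  filter_upwards [ball_mem_nhds p hε] with z hz n
  refine ⟨analyticOnNhd_taylorCoeff_slice hU hr hf n z (h z 0 ⟨hz, mem_ball_self hε⟩).2.1,
    norm_taylorCoeff_le (half_pos hε) ?_ (fun s hs =>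
      (h z s ⟨hz, hsub (sphere_subset_closedBall hs)⟩).1.le) n⟩
  exact (differentiableOn_slice hf (h z 0 ⟨hz, mem_ball_self hε⟩).2.1).diffContOnCl_ball
    fun s hs => (h z s ⟨hz, hsub hs⟩).2.2

end TaylorCoefficients

theorem GeometricAnalyticAt.analyticAt_tsum_mul_pow {E : Type*} [NormedAddCommGroup E]
    [NormedSpace ℂ E] [FiniteDimensional ℂ E] {a : ℕ → E → ℂ} {p : E}
    (ha : GeometricAnalyticAt a p)
    (hdecay : ∀ᶠ z in 𝓝 p, SuperexponentialDecay fun n => a n z) (s₀ : ℂ) :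
    AnalyticAt ℂ (fun q : E × ℂ => ∑' n, a n q.1 * q.2 ^ n) (p, s₀) := by
  let T := ‖s₀‖ + 1
  have hT : 0 < T := by positivity
  obtain ⟨V, hV, hVa⟩ := ha.exists_mem_nhds_eventually_norm_le_pow hdecay (ε := 1 / (2 * T))
    (by positivity)
  obtain ⟨N, hN⟩ := eventually_atTop.1 hVa
  obtain ⟨C, M, h⟩ := ha
  obtain ⟨δ, hδ, hball⟩ := eventually_nhds_iff_ball.1 (h.and hV)
  have hmem : ∀ q ∈ ball (p, s₀) (min δ 1), q.1 ∈ ball p δ ∧ ‖q.2‖ ≤ T := fun q hq => by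
    rw [← ball_prod_same] at hq
    refine ⟨ball_subset_ball (min_le_left _ _) hq.1, ?_⟩
    have hdist : ‖q.2 - s₀‖ ≤ 1 := (mem_ball_iff_norm.1 hq.2).le.trans (min_le_right δ 1)
    exact (norm_le_norm_add_norm_sub' q.2 s₀).trans (add_le_add le_rfl hdist)
  refine analyticAt_tsum_of_forall_mem_ball_norm_le (A := fun n (q : E × ℂ) => a n q.1 * q.2 ^ n)
    (u := fun n => if N ≤ n then (1 / 2) ^ n else C * M ^ n * T ^ n)
    (lt_min hδ one_pos) ?_ (fun n q hq => ?_) fun n q hq => ?_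
  · refine summable_geometric_two.congr_cofinite ?_
    rw [Nat.cofinite_eq_atTop]
    filter_upwards [eventually_ge_atTop N] with n hn
    rw [if_pos hn]
  · exact (((hball _ (hmem q hq).1).1 n).1.comp (f := Prod.fst) analyticAt_fst).mul
      (analyticAt_snd.pow n)
  · obtain ⟨hq1, hq2⟩ := hmem q hq
    have hpow : ‖q.2‖ ^ n ≤ T ^ n := by gcongr
    rw [norm_mul, norm_pow]
    split_ifs with hn
    · calc ‖a n q.1‖ * ‖q.2‖ ^ n ≤ (1 / (2 * T)) ^ n * T ^ n := by
            gcongr; exact hN n hn _ (hball _ hq1).2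
        _ = (1 / 2) ^ n := by rw [← mul_pow]; congr 1; field_simp
    · exact mul_le_mul ((hball _ hq1).1 n).2 hpow (by positivity)
        ((norm_nonneg _).trans ((hball _ hq1).1 n).2)

theorem hartogs_extension_over_real_slice_general {ι : Type*} [Fintype ι] {U : Set (ι → ℂ)}
    (hU : IsOpen U) (hUc : IsPreconnected U) {x0 : ι → ℂ} (hx0U : x0 ∈ U)
    (hx0 : ∀ j, (x0 j).im = 0) {r : ℝ} (hr : 0 < r) {f : (ι → ℂ) × ℂ → ℂ}
    (hf : AnalyticOnNhd ℂ f (U ×ˢ ball 0 r))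
    (hext : ∀ᶠ x in 𝓝 x0, (∀ j, (x j).im = 0) →
      ∃ g : ℂ → ℂ, AnalyticOnNhd ℂ g univ ∧ ∀ s ∈ ball 0 r, g s = f (x, s)) :
    ∃ F : (ι → ℂ) × ℂ → ℂ, AnalyticOnNhd ℂ F (U ×ˢ univ) ∧
      ∀ z ∈ U, ∀ s ∈ ball 0 r, F (z, s) = f (z, s) := by
  let a : ℕ → (ι → ℂ) → ℂ := fun n z => taylorCoeff (fun s => f (z, s)) n
  have ha : ∀ z ∈ U, GeometricAnalyticAt a z := fun z hz =>
    geometricAnalyticAt_taylorCoeff_slice hU hr hf hz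
  have hreal : ∀ᶠ x in 𝓝 x0, (∀ j, (x j).im = 0) → SuperexponentialDecay fun n => a n x :=
    hext.mono fun x hx hxim => by
      obtain ⟨g, hg, hgf⟩ := hx hxim
      have hgf0 : g =ᶠ[𝓝 0] fun s => f (x, s) := eventually_of_mem (ball_mem_nhds 0 hr) hgf
      have hga : taylorCoeff g = fun n => a n x := funext fun n => by
        simp only [a, taylorCoeff, hgf0.iteratedDeriv_eq n]
      exact hga ▸ superexponentialDecay_taylorCoeff fun s => (hg s trivial).differentiableAt
  have hdecay : ∀ z ∈ U, SuperexponentialDecay fun n => a n z :=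
    superexponentialDecay_of_isPreconnected hUc ha hx0U
      ((ha x0 hx0U).eventually_superexponentialDecay_of_real hx0 hreal)
  refine ⟨fun q => ∑' n, a n q.1 * q.2 ^ n, fun q hq => ?_, fun z hz s hs => ?_⟩
  · exact (ha q.1 hq.1).analyticAt_tsum_mul_pow
      (eventually_of_mem (hU.mem_nhds hq.1) hdecay) q.2
  · exact (hasSum_taylorCoeff (differentiableOn_slice hf hz) hs).tsum_eq

/-- Hartogs-type extension over the real slice in finite dimensions: if `f` is analytic
on `B × 𝔻` (a ball in `Fin k → ℂ` centered at a real point times the unit disk) and all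
slices `f(x, ·)` over real points `x ∈ B` extend to entire functions, then `f` extends
analytically to `B × ℂ`. -/
theorem hartogs_extension_over_real_slice
    (k : ℕ) (hk : 0 < k)
    (x0 : Fin k → ℂ) (hx0 : ∀ j, (x0 j).im = 0)
    (β : ℝ) (hβ : 0 < β)
    (f : (Fin k → ℂ) × ℂ → ℂ)
    (hf : AnalyticOnNhd ℂ f (Metric.ball x0 β ×ˢ Metric.ball (0 : ℂ) 1))
    (hext : ∀ x ∈ Metric.ball x0 β, (∀ j, (x j).im = 0) →
      ∃ g : ℂ → ℂ, AnalyticOnNhd ℂ g Set.univ ∧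
        ∀ s ∈ Metric.ball (0 : ℂ) 1, g s = f (x, s)) :
    ∃ F : (Fin k → ℂ) × ℂ → ℂ,
      AnalyticOnNhd ℂ F (Metric.ball x0 β ×ˢ (Set.univ : Set ℂ)) ∧
      ∀ z ∈ Metric.ball x0 β, ∀ s ∈ Metric.ball (0 : ℂ) 1, F (z, s) = f (z, s) :=
  hartogs_extension_over_real_slice_general isOpen_ball (convex_ball x0 β).isPreconnected
    (mem_ball_self hβ) hx0 one_pos hf (eventually_of_mem (ball_mem_nhds x0 hβ) hext)
end
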